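/- arXiv:1512.03021 — 7 statements merged into one kernel-verified Lean document; each statement's English description precedes it below -/
import Mathlib

section
/- Let G be a finitely generated group with a normal subgroup N such that the quotient G/N is either polycyclic or an FC-group, and let H be a finitely generated group with G ≈ₜ H. Then there exists a normal subgroup 𝔑 of H such that G/N is isomorphic to H/𝔑. -/
/-!
Write `Q = G ⧸ N`. Given finitely many subsets of `Q`, the atoms of the Boolean algebra they
generate pull back to a partition of `G`; since `G ≈ₜ H`, there are generators `h` of `H` and a
partition of `H` with the same configuration set. So `H` carries subsets `F A` which behave under
left and right multiplication by the `h i` as the subsets `A` of `Q` do under the images `g i` of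
the generators of `G` (`exists_mimics`).

Include `{1}` and all `{g i}` among the subsets, and put `M = F {1}`. Then
`h i * M = F {g i} = M * h i`, so `M` is invariant under conjugation and its left stabilizer `𝔑`
is normal (`Mimics.normal`). For the same reason `g i ↦ h i 𝔑` is well defined and respects every
relation `g l = g i * g j` (`Mimics.mk_eq_of_mul_eq`).

The hypothesis on `Q` enters through a chain of subgroups from `⊥` to `⊤` whose factors are finite
or infinite cyclic (`Series`). For polycyclic `Q` it is given; a finitely generated FC-group has a
finitely generated centre of finite index. The chain has two consequences.

* `Q` is finitely presented (`Series.finPres`). So if the `g i` exhaust `B ∪ B * B` for a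
  sufficiently large finite `B`, the assignment `g i ↦ h i 𝔑` extends to a homomorphism
  `θ : Q →* H ⧸ 𝔑`. It is surjective since the `h i` generate `H`.
* Injectivity of `θ` is detected by finitely many subsets (`Series.separated`), namely the members
  `L` of the chain and, for an infinite cyclic factor generated by `t`, the union of the `t ^ n L`
  with `0 < n`. An element of `𝔑` preserves `M`, while a lift of an element of `Q` outside the
  smaller subgroup moves `M` into a set disjoint from it.
-/

open scoped Pointwise

universe u v

/-- `g` is an (ordered, finite) generating tuple of the group `G`. -/
def IsGenerating {G : Type*} [Group G] {n : ℕ} (g : Fin n → G) : Prop :=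
  Subgroup.closure (Set.range g) = ⊤

/-- `E` is an (ordered, finite) partition of the underlying set of `G`:
every element lies in exactly one cell. -/
def IsPartition {G : Type*} {m : ℕ} (E : Fin m → Set G) : Prop :=
  ∀ x : G, ∃! i : Fin m, x ∈ E i

/-- The type in which two-sided configurations corresponding to a generating tuple of
length `n` and a partition of length `m` live: a tuple `(c₀, (c₁,…,cₙ), (c_{n+1},…,c_{2n}))`. -/
abbrev TwoSidedConfig (n m : ℕ) := Fin m × (Fin n → Fin m) × (Fin n → Fin m)

/-- The two-sided configuration set `Con_t(𝔤, ℰ)`. -/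
def TwoSidedConfigSet {G : Type*} [Group G] {n m : ℕ} (g : Fin n → G) (E : Fin m → Set G) :
    Set (TwoSidedConfig n m) :=
  {c | ∃ x ∈ E c.1, ∀ i : Fin n, g i * x ∈ E (c.2.1 i) ∧ x * g i ∈ E (c.2.2 i)}

/-- `Con_t(G)`: the collection of all two-sided configuration sets of `G`,
over all configuration pairs `(𝔤, ℰ)`. -/
def TwoSidedConfigSets (G : Type*) [Group G] : Set (Σ n m : ℕ, Set (TwoSidedConfig n m)) :=
  {S | ∃ g : Fin S.1 → G, ∃ E : Fin S.2.1 → Set G,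
    IsGenerating g ∧ IsPartition E ∧ S.2.2 = TwoSidedConfigSet g E}

/-- Two-sided configuration equivalence `G ≈ₜ H`. -/
def ConfigEqT (G : Type*) (H : Type*) [Group G] [Group H] : Prop :=
  TwoSidedConfigSets G = TwoSidedConfigSets H

/-- The (one-sided) configuration set `Con(𝔤, ℰ)`. -/
def ConfigSet {G : Type*} [Group G] {n m : ℕ} (g : Fin n → G) (E : Fin m → Set G) :
    Set (Fin m × (Fin n → Fin m)) :=
  {c | ∃ x ∈ E c.1, ∀ k : Fin n, g k * x ∈ E (c.2 k)}

/-- `Con(G)`: the collection of all configuration sets of `G`. -/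
def ConfigSets (G : Type*) [Group G] : Set (Σ n m : ℕ, Set (Fin m × (Fin n → Fin m))) :=
  {S | ∃ g : Fin S.1 → G, ∃ E : Fin S.2.1 → Set G,
    IsGenerating g ∧ IsPartition E ∧ S.2.2 = ConfigSet g E}

/-- Configuration equivalence `G ≈ H`. -/
def ConfigEq (G : Type*) (H : Type*) [Group G] [Group H] : Prop :=
  ConfigSets G = ConfigSets H

/-- The word `W(J, ρ; 𝔤) = ∏_{i=1}^{p} g_{J(i)}^{ρ(i)}` associated to a representative
pair `(J, ρ)` (here `ρ i = true` encodes exponent `1`, and `ρ i = false` exponent `-1`). -/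
def word {G : Type*} [Group G] {n p : ℕ} (g : Fin n → G) (J : Fin p → Fin n)
    (ρ : Fin p → Bool) : G :=
  ((List.finRange p).map (fun i => if ρ i then g (J i) else (g (J i))⁻¹)).prod

/-- The configuration pair `(𝔤, q⁻¹(ℰ))` is golden w.r.t. the normal subgroup `N`,
where `ℰ` is a partition of `G ⧸ N` containing the singleton `{1}`. -/
def IsGoldenConfigPair {G : Type u} [Group G] (N : Subgroup G) [N.Normal] {n m : ℕ}
    (g : Fin n → G) (E : Fin m → Set (G ⧸ N)) : Prop :=
  IsGenerating g ∧ IsPartition E ∧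
  ∃ i₀ : Fin m, E i₀ = ({1} : Set (G ⧸ N)) ∧
  ∃ (p : G → ℕ) (J : ∀ x : G, Fin (p x) → Fin n) (ρ : ∀ x : G, Fin (p x) → Bool),
    (∀ x : G, x ∉ N →
      QuotientGroup.mk' N x = word (fun i => QuotientGroup.mk' N (g i)) (J x) (ρ x)) ∧
    (∀ (H : Type v) [Group H] (h : Fin n → H) (F : Fin m → Set H),
      IsGenerating h → IsPartition F →
      TwoSidedConfigSet g (fun i => QuotientGroup.mk' N ⁻¹' E i) = TwoSidedConfigSet h F →
      ∀ x : G, x ∉ N → word h (J x) (ρ x) • F i₀ ∩ F i₀ = ∅)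

/-- `G` has a golden configuration pair w.r.t. the normal subgroup `N`. -/
def HasGoldenConfigPairWrt (G : Type u) [Group G] (N : Subgroup G) [N.Normal] : Prop :=
  ∃ (n m : ℕ) (g : Fin n → G) (E : Fin m → Set (G ⧸ N)), IsGoldenConfigPair.{u, v} N g E

/-- `G` has a golden configuration pair (i.e. one w.r.t. the trivial subgroup). -/
def HasGoldenConfigPair (G : Type u) [Group G] : Prop :=
  HasGoldenConfigPairWrt.{u, v} G ⊥

/-- `(𝔤, ς, {(J_g, ρ_g)})` is a golden system w.r.t. the normal subgroup `N`.  The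
finite-range function `ς` on `G ⧸ N` is encoded as a surjection onto `Fin m`; the
`ς`-partition of `G` is then `v ↦ (ς ∘ q)⁻¹(v)`, `v : Fin m`. -/
def IsGoldenSystem {G : Type u} [Group G] (N : Subgroup G) [N.Normal] {n m : ℕ}
    (g : Fin n → G) (ς : G ⧸ N → Fin m)
    {p : G → ℕ} (J : ∀ x : G, Fin (p x) → Fin n) (ρ : ∀ x : G, Fin (p x) → Bool) : Prop :=
  IsGenerating g ∧ Function.Surjective ς ∧
  (∀ x : G, x ∉ N →
    QuotientGroup.mk' N x = word (fun i => QuotientGroup.mk' N (g i)) (J x) (ρ x)) ∧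
  ((fun x : G => ς (QuotientGroup.mk' N x)) ⁻¹' {ς (1 : G ⧸ N)} = (N : Set G)) ∧
  (∀ (H : Type v) [Group H] (h : Fin n → H) (F : Fin m → Set H),
    IsGenerating h → IsPartition F →
    TwoSidedConfigSet g (fun v => (fun x : G => ς (QuotientGroup.mk' N x)) ⁻¹' {v})
      = TwoSidedConfigSet h F →
    ∀ x : G, x ∉ N →
      word h (J x) (ρ x) • F (ς (1 : G ⧸ N)) ⊆ F (ς (QuotientGroup.mk' N x)))

/-- `G` admits a golden system w.r.t. the normal subgroup `N`. -/
def HasGoldenSystemWrt (G : Type u) [Group G] (N : Subgroup G) [N.Normal] : Prop :=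
  ∃ (n m : ℕ) (g : Fin n → G) (ς : G ⧸ N → Fin m) (p : G → ℕ)
    (J : ∀ x : G, Fin (p x) → Fin n) (ρ : ∀ x : G, Fin (p x) → Bool),
    IsGoldenSystem.{u, v} N g ς J ρ

/-- `G` admits a golden system (i.e. one w.r.t. the trivial subgroup). -/
def HasGoldenSystem (G : Type u) [Group G] : Prop :=
  HasGoldenSystemWrt.{u, v} G ⊥

/-- A group is Hopfian if every surjective endomorphism is an automorphism. -/
def IsHopfianGroup (G : Type*) [Group G] : Prop :=
  ∀ f : G →* G, Function.Surjective f → Function.Bijective f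

/-- A group is finitely presented if it is presented by finitely many generators
and finitely many relators. -/
def IsFinitelyPresentedGroup (G : Type*) [Group G] : Prop :=
  ∃ (n : ℕ) (rels : Set (FreeGroup (Fin n))),
    rels.Finite ∧ Nonempty (PresentedGroup rels ≃* G)

/-- A group is polycyclic if it has a subnormal series with cyclic factors. -/
def IsPolycyclic (G : Type*) [Group G] : Prop :=
  ∃ (k : ℕ) (c : Fin (k + 1) → Subgroup G),
    c 0 = ⊥ ∧ c (Fin.last k) = ⊤ ∧
    ∀ i : Fin k, c i.castSucc ≤ c i.succ ∧
      ∃ hn : ((c i.castSucc).subgroupOf (c i.succ)).Normal,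
        letI := hn
        IsCyclic ((c i.succ) ⧸ (c i.castSucc).subgroupOf (c i.succ))

/-- An FC-group: every conjugacy class is finite. -/
def IsFCGroup (G : Type*) [Group G] : Prop :=
  ∀ g : G, {h : G | IsConj g h}.Finite

/-- A normal subset: `hM = Mh` for all `h`. -/
def IsNormalSubset {H : Type*} [Group H] (M : Set H) : Prop :=
  ∀ h : H, (fun x => h * x) '' M = (fun x => x * h) '' M

/-- `E'` is a refinement of the partition `E`. -/
def IsRefinement {G : Type*} {r s : ℕ} (E' : Fin s → Set G) (E : Fin r → Set G) : Prop :=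
  ∀ l : Fin s, ∃ k : Fin r, E' l ⊆ E k

/-- The pairs `(ℰ', ℰ)` and `(ℱ', ℱ)` are similar. -/
def SimilarPairs {G H : Type*} {r s : ℕ} (E : Fin r → Set G) (E' : Fin s → Set G)
    (F : Fin r → Set H) (F' : Fin s → Set H) : Prop :=
  ∀ k : Fin r, {l : Fin s | (E k ∩ E' l).Nonempty} = {l : Fin s | (F k ∩ F' l).Nonempty}

/-! ### Subnormal series with finite or infinite cyclic factors -/

/-- `Series L`: the subgroup `L` is reached from `⊥` by finitely many extensions, each with
finite or infinite cyclic factor. Finiteness of a factor is witnessed by a finite set `T` of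
left coset representatives (possibly redundant), an infinite cyclic factor by an element `t`
of infinite order modulo the smaller subgroup. -/
inductive Series {Q : Type u} [Group Q] : Subgroup Q → Prop
  | bot : Series ⊥
  | fin {L L' : Subgroup Q} (hL : Series L) (hle : L ≤ L')
      (hn : ∀ x ∈ L', ∀ l ∈ L, x⁻¹ * l * x ∈ L) (T : Set Q) (hT : T.Finite)
      (hTL : ∀ x ∈ T, x ∈ L') (hcov : ∀ x ∈ L', ∃ τ ∈ T, τ⁻¹ * x ∈ L) : Series L'
  | inf {L L' : Subgroup Q} (hL : Series L) (hle : L ≤ L')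
      (hn : ∀ x ∈ L', ∀ l ∈ L, x⁻¹ * l * x ∈ L) (t : Q) (htL : t ∈ L')
      (ht : ∀ n : ℕ, 0 < n → t ^ n ∉ L)
      (hcov : ∀ x ∈ L', ∃ a : ℤ, (t ^ a)⁻¹ * x ∈ L) : Series L'

theorem Series.cyclic {Q : Type u} [Group Q] {L L' : Subgroup Q} (hL : Series L) (hle : L ≤ L')
    (hn : ∀ x ∈ L', ∀ l ∈ L, x⁻¹ * l * x ∈ L) (t : Q) (htL : t ∈ L')
    (hcov : ∀ x ∈ L', ∃ a : ℤ, (t ^ a)⁻¹ * x ∈ L) : Series L' := by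
  by_cases h : ∃ n : ℕ, 0 < n ∧ t ^ n ∈ L
  · obtain ⟨n, hn0, hnL⟩ := h
    refine Series.fin hL hle hn ((fun j : ℕ => t ^ j) '' Set.Iio n)
      ((Set.finite_Iio n).image _) ?_ ?_
    · rintro _ ⟨j, -, rfl⟩
      exact pow_mem htL j
    · intro x hx
      obtain ⟨a, ha⟩ := hcov x hx
      have hn' : (0 : ℤ) < n := by exact_mod_cast hn0
      have h1 := Int.emod_nonneg a hn'.ne'
      have h2 := Int.emod_lt_of_pos a hn'
      refine ⟨t ^ (a % n).toNat, ⟨(a % n).toNat, ?_, rfl⟩, ?_⟩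
      · simp only [Set.mem_Iio]; omega
      · have h3 : t ^ (a % n).toNat = t ^ (a % n) := by
          rw [← zpow_natCast, Int.toNat_of_nonneg h1]
        have h4 : t ^ a = t ^ (a % n) * (t ^ n) ^ (a / n) := by
          rw [← zpow_natCast t n, ← zpow_mul, ← zpow_add, Int.emod_add_mul_ediv]
        rw [h3]
        have h5 : (t ^ (a % n))⁻¹ * x = (t ^ n) ^ (a / n) * ((t ^ a)⁻¹ * x) := by
          rw [h4]; group
        rw [h5]
        exact mul_mem (zpow_mem hnL _) ha
  · push Not at h
    exact Series.inf hL hle hn t htL h hcov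

theorem Series.fg {Q : Type u} [Group Q] {L : Subgroup Q} (hL : Series L) :
    ∃ S : Set Q, S.Finite ∧ Subgroup.closure S = L := by
  induction hL with
  | bot => exact ⟨∅, Set.finite_empty, Subgroup.closure_empty⟩
  | @fin L L' hL hle hn T hT hTL hcov ih =>
    obtain ⟨S, hS, rfl⟩ := ih
    refine ⟨S ∪ T, hS.union hT, le_antisymm ?_ ?_⟩
    · rw [Subgroup.closure_le]
      rintro x (hx | hx)
      · exact hle (Subgroup.subset_closure hx)
      · exact hTL x hx
    · intro x hx
      obtain ⟨τ, hτ, hx'⟩ := hcov x hx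
      rw [← mul_inv_cancel_left τ x]
      exact mul_mem (Subgroup.subset_closure (Or.inr hτ))
        (Subgroup.closure_mono Set.subset_union_left hx')
  | @inf L L' hL hle hn t htL ht hcov ih =>
    obtain ⟨S, hS, rfl⟩ := ih
    refine ⟨S ∪ {t}, hS.union (Set.finite_singleton t), le_antisymm ?_ ?_⟩
    · rw [Subgroup.closure_le]
      rintro x (hx | hx)
      · exact hle (Subgroup.subset_closure hx)
      · rw [Set.mem_singleton_iff.1 hx]; exact htL
    · intro x hx
      obtain ⟨a, hx'⟩ := hcov x hx
      rw [← mul_inv_cancel_left (t ^ a) x]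
      have h1 : t ∈ Subgroup.closure (S ∪ {t}) := Subgroup.subset_closure (Or.inr rfl)
      exact mul_mem (zpow_mem h1 a)
        (Subgroup.closure_mono Set.subset_union_left hx')

theorem IsPolycyclic.series {Q : Type u} [Group Q] (h : IsPolycyclic Q) :
    Series (⊤ : Subgroup Q) := by
  obtain ⟨k, c, h0, hk, hc⟩ := h
  suffices H : ∀ i, Series (c i) from hk ▸ H (Fin.last k)
  intro i
  induction i using Fin.induction with
  | zero => rw [h0]; exact Series.bot
  | succ i ih =>
    obtain ⟨hle, hn, hcyc⟩ := hc i
    obtain ⟨q, hq⟩ := hcyc.exists_generator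
    obtain ⟨t, rfl⟩ := QuotientGroup.mk_surjective q
    refine Series.cyclic ih hle ?_ t.1 t.2 ?_
    · intro x hx l hl
      have := hn.conj_mem ⟨l, hle hl⟩ (Subgroup.mem_subgroupOf.2 hl) ⟨x, hx⟩⁻¹
      simpa [Subgroup.mem_subgroupOf] using this
    · intro x hx
      obtain ⟨a, ha⟩ := Subgroup.mem_zpowers_iff.1 (hq (QuotientGroup.mk ⟨x, hx⟩))
      refine ⟨a, ?_⟩
      rw [← QuotientGroup.mk_zpow, QuotientGroup.eq] at ha
      simpa [Subgroup.mem_subgroupOf] using ha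

theorem series_closure_of_central {Q : Type u} [Group Q] {S : Set Q} (hS : S.Finite)
    (hc : S ⊆ Subgroup.center Q) : Series (Subgroup.closure S) := by
  induction S, hS using Set.Finite.induction_on with
  | empty => rw [Subgroup.closure_empty]; exact Series.bot
  | @insert t S _ hS ih =>
    have hS' : Subgroup.closure S ≤ Subgroup.center Q :=
      (Subgroup.closure_le _).2 fun x hx => hc (Set.mem_insert_of_mem _ hx)
    refine Series.cyclic (ih fun x hx => hc (Set.mem_insert_of_mem _ hx))
      (Subgroup.closure_mono (Set.subset_insert _ _)) ?_ t
      (Subgroup.subset_closure (Set.mem_insert _ _)) ?_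
    · intro x _ l hl
      have := Subgroup.mem_center_iff.1 (hS' hl) x
      rwa [mul_assoc, ← this, inv_mul_cancel_left]
    · intro x hx
      have hnorm : (Subgroup.closure S).Normal := ⟨fun n hn g => by
        rw [Subgroup.mem_center_iff.1 (hS' hn) g, mul_inv_cancel_right]; exact hn⟩
      rw [Set.insert_eq, Subgroup.closure_union, Subgroup.mem_sup_of_normal_right] at hx
      obtain ⟨y, hy, z, hz, rfl⟩ := hx
      obtain ⟨a, rfl⟩ := Subgroup.mem_closure_singleton.1 hy
      exact ⟨a, by simpa using hz⟩

/-- A finitely generated FC-group is centre-by-finite, with finitely generated centre. -/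
theorem IsFCGroup.series {Q : Type u} [Group Q] (hfg : Group.FG Q) (h : IsFCGroup Q) :
    Series (⊤ : Subgroup Q) := by
  obtain ⟨S, hS, hSfin⟩ := Group.fg_iff.1 hfg
  have : Finite S := hSfin
  have : ∀ s : S, Finite {x : Q | IsConj (s : Q) x} := fun s => h s
  have hfin : Finite (Q ⧸ Subgroup.center Q) := by
    let φ : Q ⧸ Subgroup.center Q → ∀ s : S, {x : Q | IsConj (s : Q) x} := fun q s =>
      ⟨q.out * s * q.out⁻¹, isConj_iff.2 ⟨q.out, rfl⟩⟩
    refine Finite.of_injective φ fun q q' hqq => ?_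
    rw [← QuotientGroup.out_eq' q, ← QuotientGroup.out_eq' q', QuotientGroup.eq]
    have hle : Subgroup.closure S ≤ Subgroup.centralizer {q.out⁻¹ * q'.out} := by
      rw [Subgroup.closure_le]
      intro s hs
      have h1 : q.out * s * q.out⁻¹ = q'.out * s * q'.out⁻¹ :=
        congrArg Subtype.val (congrFun hqq ⟨s, hs⟩)
      rw [SetLike.mem_coe, Subgroup.mem_centralizer_singleton_iff]
      calc s * (q.out⁻¹ * q'.out) = q.out⁻¹ * (q.out * s * q.out⁻¹) * q'.out := by group
        _ = q.out⁻¹ * q'.out * s := by rw [h1]; group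
    rw [hS] at hle
    exact Subgroup.mem_center_iff.2 fun z =>
      Subgroup.mem_centralizer_singleton_iff.1 (hle (Subgroup.mem_top z))
  have : (Subgroup.center Q).FiniteIndex := Subgroup.finiteIndex_of_finite_quotient
  obtain ⟨R, hR, hRfin⟩ := (Subgroup.fg_iff _).1
    ((Group.fg_iff_subgroup_fg _).1 (inferInstance : Group.FG (Subgroup.center Q)))
  have hZ := series_closure_of_central hRfin (hR ▸ Subgroup.subset_closure)
  rw [hR] at hZ
  refine hZ.fin le_top ?_ (Set.range fun q : Q ⧸ Subgroup.center Q => q.out)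
    (Set.finite_range _) (fun _ _ => Subgroup.mem_top _) fun x _ => ?_
  · intro x _ l hl
    rwa [mul_assoc, ← Subgroup.mem_center_iff.1 hl x, inv_mul_cancel_left]
  · refine ⟨_, ⟨QuotientGroup.mk x, rfl⟩, ?_⟩
    rw [← QuotientGroup.eq]
    exact QuotientGroup.out_eq' _

/-! ### Finite presentability -/

/-- `F` restricts to a homomorphism on the subgroup `L`. -/
def HomOn {Q : Type u} {P : Type v} [Group Q] [Group P] (L : Subgroup Q) (F : Q → P) : Prop :=
  ∀ x ∈ L, ∀ y ∈ L, F (x * y) = F x * F y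

/-- `f` is multiplicative on products of two elements of `B`. -/
def MulOn {Q : Type u} {P : Type v} [Group Q] [Group P] (B : Set Q) (f : Q → P) : Prop :=
  ∀ x ∈ B, ∀ y ∈ B, f (x * y) = f x * f y

/-- Finite presentability of `L`, phrased without presentations: arbitrarily large finite
`B ⊆ L` have the property that every map multiplicative on `B` agrees on `B` with a
homomorphism defined on `L`. -/
def FinPres {Q : Type u} [Group Q] (L : Subgroup Q) : Prop :=
  ∀ C : Set Q, C.Finite → C ⊆ L → ∃ B : Set Q, B.Finite ∧ C ⊆ B ∧ B ⊆ L ∧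
    ∀ (P : Type v) [Group P] (f : Q → P), MulOn B f →
      ∃ F : Q → P, HomOn L F ∧ ∀ x ∈ B, F x = f x

section FinPres

variable {Q : Type u} {P : Type v} [Group Q] [Group P] {L L' : Subgroup Q}

theorem HomOn.one {F : Q → P} (hF : HomOn L F) : F 1 = 1 := by
  have := hF 1 L.one_mem 1 L.one_mem
  simpa using this

theorem HomOn.inv {F : Q → P} (hF : HomOn L F) {x : Q} (hx : x ∈ L) : F x⁻¹ = (F x)⁻¹ := by
  have := hF x hx x⁻¹ (L.inv_mem hx)
  rw [mul_inv_cancel, hF.one] at this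
  exact (inv_eq_of_mul_eq_one_right this.symm).symm

theorem HomOn.eqOn {F F' : Q → P} {S : Set Q} (hS : Subgroup.closure S = L) (hF : HomOn L F)
    (hF' : HomOn L F') (h : ∀ x ∈ S, F x = F' x) : ∀ x ∈ L, F x = F' x := by
  subst hS
  intro x hx
  induction hx using Subgroup.closure_induction with
  | mem x hx => exact h x hx
  | one => rw [hF.one, hF'.one]
  | mul x y hx hy ihx ihy => rw [hF x hx y hy, hF' x hx y hy, ihx, ihy]
  | inv x hx ih => rw [hF.inv hx, hF'.inv hx, ih]

/-- Finite presentability may be tested on one generating set `S`: every element of `L`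
is a word in `S`, and multiplicativity on the subwords forces agreement there. -/
theorem finPres_of_generators {S B : Set Q} (hSL : Subgroup.closure S = L)
    (hB : B.Finite) (hBL : B ⊆ L)
    (h : ∀ (P : Type v) [Group P] (f : Q → P), MulOn B f →
      ∃ F : Q → P, HomOn L F ∧ ∀ x ∈ S, F x = f x) :
    FinPres.{u, v} L := by
  subst hSL
  have key : ∀ x ∈ Subgroup.closure S, ∃ D : Set Q, D.Finite ∧ x ∈ D ∧
      D ⊆ Subgroup.closure S ∧ ∀ (P : Type v) [Group P] (f F : Q → P), MulOn D f →
        HomOn (Subgroup.closure S) F → (∀ x ∈ S, F x = f x) → ∀ x ∈ D, F x = f x := by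
    intro x hx
    induction hx using Subgroup.closure_induction with
    | mem x hx =>
      refine ⟨{x}, Set.finite_singleton x, rfl, ?_, ?_⟩
      · rintro _ rfl; exact Subgroup.subset_closure hx
      · rintro P _ f F - - h _ rfl; exact h _ hx
    | one =>
      refine ⟨{1}, Set.finite_singleton 1, rfl, ?_, ?_⟩
      · rintro _ rfl; exact Subgroup.one_mem _
      · rintro P _ f F hf hF - _ rfl
        have h0 : f 1 = 1 := by simpa using hf 1 rfl 1 rfl
        rw [hF.one, h0]
    | mul x y hx hy ihx ihy =>
      obtain ⟨D, hD, hxD, hDL, hD'⟩ := ihx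
      obtain ⟨E, hE, hyE, hEL, hE'⟩ := ihy
      refine ⟨D ∪ E ∪ {x * y}, (hD.union hE).union (Set.finite_singleton _), Or.inr rfl, ?_, ?_⟩
      · rintro z ((hz | hz) | rfl)
        exacts [hDL hz, hEL hz, mul_mem hx hy]
      · intro P _ f F hf hF h
        have h1 := hD' P f F (fun a ha b hb => hf a (.inl (.inl ha)) b (.inl (.inl hb))) hF h
        have h2 := hE' P f F (fun a ha b hb => hf a (.inl (.inr ha)) b (.inl (.inr hb))) hF h
        rintro z ((hz | hz) | rfl)
        · exact h1 z hz
        · exact h2 z hz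
        · rw [hF x hx y hy, hf x (.inl (.inl hxD)) y (.inl (.inr hyE)), h1 x hxD, h2 y hyE]
    | inv x hx ih =>
      obtain ⟨D, hD, hxD, hDL, hD'⟩ := ih
      refine ⟨D ∪ {x⁻¹, 1}, hD.union ((Set.finite_singleton _).insert _), by simp, ?_, ?_⟩
      · rintro z (hz | rfl | rfl)
        exacts [hDL hz, inv_mem hx, one_mem _]
      · intro P _ f F hf hF h
        have h1 := hD' P f F (fun a ha b hb => hf a (.inl ha) b (.inl hb)) hF h
        have h2 : f 1 = 1 := by
          have := hf 1 (by simp) 1 (by simp)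
          simpa using this
        rintro z (hz | rfl | rfl)
        · exact h1 z hz
        · have h3 := hf x (.inl hxD) x⁻¹ (by simp)
          rw [mul_inv_cancel, h2, ← h1 x hxD] at h3
          rw [hF.inv hx]
          exact inv_eq_of_mul_eq_one_right h3.symm
        · rw [hF.one, h2]
  choose! D hD hxD hDL hD' using key
  intro C hC hCL
  have hCB : ∀ x ∈ C ∪ B, x ∈ Subgroup.closure S := by
    rintro x (hx | hx)
    exacts [hCL hx, hBL hx]
  have hsub : C ∪ B ⊆ ⋃ x ∈ C ∪ B, D x := fun x hx =>
    Set.mem_biUnion hx (hxD x (hCB x hx))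
  refine ⟨⋃ x ∈ C ∪ B, D x, (hC.union hB).biUnion fun x hx => hD x (hCB x hx),
    Set.subset_union_left.trans hsub, Set.iUnion₂_subset fun x hx => hDL x (hCB x hx), ?_⟩
  intro P _ f hf
  obtain ⟨F, hF, hFS⟩ := h P f fun a ha b hb => hf a (hsub (.inr ha)) b (hsub (.inr hb))
  refine ⟨F, hF, fun z hz => ?_⟩
  obtain ⟨x, hx, hz⟩ := Set.mem_iUnion₂.1 hz
  exact hD' x (hCB x hx) P f F (fun a ha b hb =>
    hf a (Set.mem_biUnion hx ha) b (Set.mem_biUnion hx hb)) hF hFS z hz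

/-- A homomorphism on `L` extends to an extension `L'` of `L`, given values `ψ` on a section
`s` of `L'` over its `L`-cosets that respect conjugation and the cocycle of the extension. -/
theorem HomOn.glue (hle : L ≤ L') (hn : ∀ x ∈ L', ∀ l ∈ L, x⁻¹ * l * x ∈ L) {F : Q → P}
    (hF : HomOn L F) (s : Q → Q) (ψ : Q → P) (hs : ∀ x ∈ L', (s x)⁻¹ * x ∈ L)
    (hconj : ∀ y ∈ L', ∀ l ∈ L, F l * ψ y = ψ y * F ((s y)⁻¹ * l * s y))
    (hcoc : ∀ x ∈ L', ∀ y ∈ L', ψ x * ψ y = ψ (x * y) * F ((s (x * y))⁻¹ * s x * s y)) :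
    HomOn L' fun x => ψ x * F ((s x)⁻¹ * x) := by
  have hs' : ∀ x ∈ L', s x ∈ L' := fun x hx => by
    have := mul_mem hx (inv_mem (hle (hs x hx)))
    simpa using this
  intro x hx y hy
  have h1 := hn (s y) (hs' y hy) _ (hs x hx)
  have h2 : (s (x * y))⁻¹ * s x * s y ∈ L := by
    have := mul_mem (hs (x * y) (mul_mem hx hy)) (inv_mem (mul_mem h1 (hs y hy)))
    convert this using 1
    group
  calc ψ (x * y) * F ((s (x * y))⁻¹ * (x * y))
      = ψ (x * y) * F ((s (x * y))⁻¹ * s x * s y *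
          ((s y)⁻¹ * ((s x)⁻¹ * x) * s y * ((s y)⁻¹ * y))) := by congr 2; group
    _ = ψ x * ψ y * (F ((s y)⁻¹ * ((s x)⁻¹ * x) * s y) * F ((s y)⁻¹ * y)) := by
        rw [hF _ h2 _ (mul_mem h1 (hs y hy)), hF _ h1 _ (hs y hy), hcoc x hx y hy, mul_assoc (ψ (x * y))]
    _ = ψ x * F ((s x)⁻¹ * x) * (ψ y * F ((s y)⁻¹ * y)) := by
        rw [← mul_assoc, mul_assoc (ψ x) (ψ y), ← hconj y hy _ (hs x hx)]
        simp only [← mul_assoc]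

/-- If `f` is multiplicative around `τ` and a generating set of `L`, then `f τ` conjugates the
homomorphism `F` on `L` as `τ` does. -/
theorem HomOn.conj {S B : Set Q} (hS : Subgroup.closure S = L) {F f : Q → P} (hF : HomOn L F)
    (hf : MulOn B f) {τ : Q} (hτ : ∀ l ∈ L, τ⁻¹ * l * τ ∈ L) (hτB : τ ∈ B)
    (hSB : ∀ b ∈ S, b ∈ B ∧ F b = f b)
    (hSB' : ∀ b ∈ S, τ⁻¹ * b * τ ∈ B ∧ F (τ⁻¹ * b * τ) = f (τ⁻¹ * b * τ)) :
    ∀ l ∈ L, F l * f τ = f τ * F (τ⁻¹ * l * τ) := by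
  have h1 : HomOn L fun l => (f τ)⁻¹ * F l * f τ := fun x hx y hy => by
    simp only [hF x hx y hy]; group
  have h2 : HomOn L fun l => F (τ⁻¹ * l * τ) := fun x hx y hy => by
    simp only [← hF _ (hτ x hx) _ (hτ y hy)]; congr 1; group
  have h3 := HomOn.eqOn hS h1 h2 fun b hb => by
    have h4 : f b * f τ = f τ * f (τ⁻¹ * b * τ) := by
      rw [← hf b (hSB b hb).1 τ hτB, ← hf τ hτB _ (hSB' b hb).1]; congr 1; group
    simp only [(hSB b hb).2, (hSB' b hb).2]
    rw [mul_assoc, h4, inv_mul_cancel_left]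
  intro l hl
  rw [← h3 l hl]; group

/-- Finite presentability passes to extensions with finite factor: `B` must also contain the
representatives `T`, their conjugates of the generators of `L`, and the finitely many values of
the cocycle. -/
theorem FinPres.fin (hL : FinPres.{u, v} L) {S : Set Q} (hS : S.Finite)
    (hSL : Subgroup.closure S = L) (hle : L ≤ L')
    (hn : ∀ x ∈ L', ∀ l ∈ L, x⁻¹ * l * x ∈ L) {T : Set Q} (hT : T.Finite)
    (hTL : ∀ x ∈ T, x ∈ L') (hcov : ∀ x ∈ L', ∃ τ ∈ T, τ⁻¹ * x ∈ L) : FinPres.{u, v} L' := by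
  have hSL' : ∀ x ∈ S, x ∈ L := fun x hx => hSL ▸ Subgroup.subset_closure hx
  obtain ⟨B, hB, hCB, hBL, hBf⟩ := hL
    ((S ∪ T⁻¹ * S * T ∪ T⁻¹ * T * T ∪ T ∪ T⁻¹ * T) ∩ L)
    (Set.Finite.inter_of_left (((((hS.union ((hT.inv.mul hS).mul hT)).union
      ((hT.inv.mul hT).mul hT)).union hT).union (hT.inv.mul hT))) _) Set.inter_subset_right
  have hgen : Subgroup.closure (S ∪ T) = L' := by
    refine le_antisymm ?_ ?_
    · rw [Subgroup.closure_le]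
      rintro x (hx | hx)
      exacts [hle (hSL' x hx), hTL x hx]
    · intro x hx
      obtain ⟨τ, hτ, hx'⟩ := hcov x hx
      rw [← mul_inv_cancel_left τ x]
      exact mul_mem (Subgroup.subset_closure (Or.inr hτ))
        (Subgroup.closure_mono Set.subset_union_left (hSL ▸ hx'))
  refine finPres_of_generators hgen (hB.union hT)
    (Set.union_subset (hBL.trans hle) hTL) fun P _ f hf => ?_
  obtain ⟨F, hF, hFf⟩ := hBf P f fun a ha b hb => hf a (.inl ha) b (.inl hb)
  choose! s hsT hs using hcov
  have hSB : ∀ b ∈ S, b ∈ B := fun b hb => hCB ⟨by simp [hb], hSL' b hb⟩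
  have hSTB : ∀ b ∈ S, ∀ τ ∈ T, τ⁻¹ * b * τ ∈ B := fun b hb τ hτ =>
    hCB ⟨.inl (.inl (.inl (.inr (Set.mul_mem_mul (Set.mul_mem_mul (Set.inv_mem_inv.2 hτ) hb) hτ)))),
      hn τ (hTL τ hτ) b (hSL' b hb)⟩
  refine ⟨fun x => f (s x) * F ((s x)⁻¹ * x), ?_, ?_⟩
  · refine HomOn.glue hle hn hF s (fun x => f (s x)) hs ?_ ?_
    · intro y hy
      exact HomOn.conj hSL hF hf (hn _ (hTL _ (hsT y hy))) (.inr (hsT y hy))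
        (fun b hb => ⟨.inl (hSB b hb), hFf b (hSB b hb)⟩)
        (fun b hb => ⟨.inl (hSTB b hb _ (hsT y hy)), hFf _ (hSTB b hb _ (hsT y hy))⟩)
    · intro x hx y hy
      have hxy := hsT _ (mul_mem hx hy)
      have h1 := hn (s y) (hTL _ (hsT y hy)) _ (hs x hx)
      have h2 : (s (x * y))⁻¹ * s x * s y ∈ L := by
        have := mul_mem (hs (x * y) (mul_mem hx hy)) (inv_mem (mul_mem h1 (hs y hy)))
        convert this using 1
        group
      have h3 : (s (x * y))⁻¹ * s x * s y ∈ B := hCB ⟨.inl (.inl (.inr (Set.mul_mem_mul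
        (Set.mul_mem_mul (Set.inv_mem_inv.2 hxy) (hsT x hx)) (hsT y hy)))), h2⟩
      rw [hFf _ h3, ← hf _ (.inr hxy) _ (.inl h3), ← hf _ (.inr (hsT x hx)) _ (.inr (hsT y hy))]
      congr 1; group
  · rintro x (hx | hx)
    · have hxL := hSL' x hx
      have hsx := hs x (hle hxL)
      have h1 : s x ∈ L := by
        have := mul_mem hxL (inv_mem hsx)
        simpa using this
      have h2 : s x ∈ B := hCB ⟨.inl (.inr (hsT x (hle hxL))), h1⟩
      simp only
      rw [← hFf _ h2, ← hF _ h1 _ hsx, mul_inv_cancel_left, hFf x (hSB x hx)]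
    · have hxL := hTL x hx
      have h2 : (s x)⁻¹ * x ∈ B :=
        hCB ⟨.inr (Set.mul_mem_mul (Set.inv_mem_inv.2 (hsT x hxL)) hx), hs x hxL⟩
      simp only
      rw [hFf _ h2, ← hf _ (.inr (hsT x hxL)) _ (.inl h2), mul_inv_cancel_left]

/-- Finite presentability passes to extensions with infinite cyclic factor. These split, so the
section `a ↦ t ^ a` has trivial cocycle and only conjugation by `t` has to be controlled. -/
theorem FinPres.inf (hL : FinPres.{u, v} L) {S : Set Q} (hS : S.Finite)
    (hSL : Subgroup.closure S = L) (hle : L ≤ L')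
    (hn : ∀ x ∈ L', ∀ l ∈ L, x⁻¹ * l * x ∈ L) {t : Q} (htL : t ∈ L')
    (ht : ∀ n : ℕ, 0 < n → t ^ n ∉ L)
    (hcov : ∀ x ∈ L', ∃ a : ℤ, (t ^ a)⁻¹ * x ∈ L) : FinPres.{u, v} L' := by
  have hSL' : ∀ x ∈ S, x ∈ L := fun x hx => hSL ▸ Subgroup.subset_closure hx
  obtain ⟨B, hB, hCB, hBL, hBf⟩ := hL (S ∪ (fun b => t⁻¹ * b * t) '' S)
    (hS.union (hS.image _)) (by
      rintro _ (hx | ⟨x, hx, rfl⟩)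
      exacts [hSL' _ hx, hn t htL x (hSL' x hx)])
  have hgen : Subgroup.closure (S ∪ {t}) = L' := by
    refine le_antisymm ?_ ?_
    · rw [Subgroup.closure_le]
      rintro x (hx | rfl)
      exacts [hle (hSL' x hx), htL]
    · intro x hx
      obtain ⟨a, hx'⟩ := hcov x hx
      rw [← mul_inv_cancel_left (t ^ a) x]
      have h1 : t ∈ Subgroup.closure (S ∪ {t}) := Subgroup.subset_closure (Or.inr rfl)
      exact mul_mem (zpow_mem h1 a)
        (Subgroup.closure_mono Set.subset_union_left (hSL ▸ hx'))
  have ht' : ∀ a : ℤ, t ^ a ∈ L → a = 0 := by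
    intro a ha
    by_contra h0
    rcases lt_or_gt_of_ne h0 with h | h
    · refine ht (-a).toNat (by omega) ?_
      rw [← zpow_natCast, Int.toNat_of_nonneg (by omega), zpow_neg]
      exact inv_mem ha
    · refine ht a.toNat (by omega) ?_
      rwa [← zpow_natCast, Int.toNat_of_nonneg (by omega)]
  refine finPres_of_generators hgen
    (hB.union (Set.finite_singleton t)) (Set.union_subset (hBL.trans hle) (by simpa using htL))
    fun P _ f hf => ?_
  obtain ⟨F, hF, hFf⟩ := hBf P f fun a ha b hb => hf a (.inl ha) b (.inl hb)
  choose! s hs using hcov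
  have hSB : ∀ b ∈ S, b ∈ B := fun b hb => hCB (.inl hb)
  have hSTB : ∀ b ∈ S, t⁻¹ * b * t ∈ B := fun b hb => hCB (.inr ⟨b, hb, rfl⟩)
  have hconj := HomOn.conj hSL hF hf (hn t htL) (.inr rfl)
    (fun b hb => ⟨.inl (hSB b hb), hFf b (hSB b hb)⟩)
    (fun b hb => ⟨.inl (hSTB b hb), hFf _ (hSTB b hb)⟩)
  have hnz : ∀ a : ℤ, ∀ l ∈ L, (t ^ a)⁻¹ * l * t ^ a ∈ L := fun a => hn _ (zpow_mem htL a)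
  have hconjz : ∀ a : ℤ, ∀ l ∈ L, F l * f t ^ a = f t ^ a * F ((t ^ a)⁻¹ * l * t ^ a) := by
    intro a
    induction a using Int.induction_on with
    | zero => intro l _; simp
    | succ n ih =>
      intro l hl
      rw [zpow_add_one, ← mul_assoc, ih l hl, mul_assoc, hconj _ (hnz n l hl), mul_assoc]
      rw [← mul_assoc, zpow_add_one]
      congr 2; group
    | pred n ih =>
      intro l hl
      have h1 : (t ^ (-(n : ℤ) - 1))⁻¹ * l * t ^ (-(n : ℤ) - 1) ∈ L := hnz _ l hl
      have h2 := hconj _ h1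
      have h3 : t⁻¹ * ((t ^ (-(n : ℤ) - 1))⁻¹ * l * t ^ (-(n : ℤ) - 1)) * t =
          (t ^ (-(n : ℤ)))⁻¹ * l * t ^ (-(n : ℤ)) := by
        rw [zpow_sub_one]; group
      rw [h3] at h2
      rw [zpow_sub_one (f t), ← mul_assoc, ih l hl, mul_assoc, mul_assoc _ (f t)⁻¹]
      congr 1
      rw [eq_inv_mul_iff_mul_eq, ← mul_assoc, ← h2, mul_inv_cancel_right]
  have huniq : ∀ x ∈ L', ∀ a : ℤ, (t ^ a)⁻¹ * x ∈ L → s x = a := by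
    intro x hx a ha
    have := mul_mem ha (inv_mem (hs x hx))
    have h2 : (t ^ a)⁻¹ * x * ((t ^ s x)⁻¹ * x)⁻¹ = t ^ (s x - a) := by
      rw [sub_eq_neg_add, zpow_add, zpow_neg]; group
    rw [h2] at this
    have := ht' _ this
    omega
  refine ⟨fun x => f t ^ s x * F ((t ^ s x)⁻¹ * x), ?_, ?_⟩
  · refine HomOn.glue hle hn hF (fun x => t ^ s x) (fun x => f t ^ s x) hs ?_ ?_
    · intro y hy l hl
      exact hconjz _ l hl
    · intro x hx y hy
      have h1 : s (x * y) = s x + s y := by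
        refine huniq _ (mul_mem hx hy) _ ?_
        have := mul_mem (hnz (s y) _ (hs x hx)) (hs y hy)
        convert this using 1
        rw [zpow_add]; group
      simp only [h1, zpow_add]
      have h2 : (t ^ s x * t ^ s y)⁻¹ * t ^ s x * t ^ s y = 1 := by group
      rw [h2, hF.one, mul_one]
  · rintro x (hx | rfl)
    · have h0 : s x = 0 := huniq x (hle (hSL' x hx)) 0 (by simpa using hSL' x hx)
      simp only [h0, zpow_zero, inv_one, one_mul]
      exact hFf x (hSB x hx)
    · have h0 : s x = 1 := huniq x htL 1 (by simp)
      simp only [h0, zpow_one, inv_mul_cancel, hF.one, mul_one]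

theorem Series.finPres (hL : Series L) : FinPres.{u, v} L := by
  induction hL with
  | bot =>
    refine finPres_of_generators (S := ∅) (B := ∅) Subgroup.closure_empty
      Set.finite_empty (Set.empty_subset _) fun P _ f _ => ⟨fun _ => 1, ?_, ?_⟩
    · intro x _ y _; simp
    · simp
  | fin hL hle hn T hT hTL hcov ih =>
    obtain ⟨S, hS, hSL⟩ := hL.fg
    exact ih.fin hS hSL hle hn hT hTL hcov
  | inf hL hle hn t htL ht hcov ih =>
    obtain ⟨S, hS, hSL⟩ := hL.fg
    exact ih.inf hS hSL hle hn htL ht hcov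

end FinPres

/-! ### Transferring a family of subsets along a configuration set -/

/-- `H` with generators `h` and subsets `F A`, `A ∈ 𝒜`, looks locally like `Q` with
generators `g` and the subsets `A` themselves: at every `y : H` the memberships of `y`, of the
`h i * y` and of the `y * h i` are those of some `x : Q`. Outside `𝒜` the values of `F` are
irrelevant. -/
structure Mimics {Q : Type u} {H : Type v} [Group Q] [Group H] {n : ℕ} (g : Fin n → Q)
    (h : Fin n → H) (𝒜 : Set (Set Q)) (F : Set Q → Set H) : Prop where
  gen : Subgroup.closure (Set.range h) = ⊤
  nonempty : (F {1}).Nonempty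
  loc : ∀ y, ∃ x, ∀ A ∈ 𝒜, (y ∈ F A ↔ x ∈ A) ∧
    ∀ i, (h i * y ∈ F A ↔ g i * x ∈ A) ∧ (y * h i ∈ F A ↔ x * g i ∈ A)

/-- The generators of `G` may be chosen to map onto any given finite subset `S` of `G ⧸ N`
that is large enough to contain the image of one generating set of `G`. -/
theorem exists_mimics {G : Type u} {H : Type v} [Group G] [Group H] (hG : Group.FG G)
    (N : Subgroup G) [N.Normal] (heq : ConfigEqT G H) :
    ∃ X₀ : Set (G ⧸ N), X₀.Finite ∧ ∀ S : Set (G ⧸ N), S.Finite → X₀ ⊆ S →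
      ∃ (n : ℕ) (g : Fin n → G ⧸ N), Set.range g = S ∧
        ∀ 𝒜 : Set (Set (G ⧸ N)), 𝒜.Finite → {1} ∈ 𝒜 →
          ∃ (h : Fin n → H) (F : Set (G ⧸ N) → Set H), Mimics g h 𝒜 F := by
  classical
  obtain ⟨X, hX, hXfin⟩ := Group.fg_iff.1 hG
  refine ⟨(fun x : G => (x : G ⧸ N)) '' X, hXfin.image _, fun S hS hXS => ?_⟩
  let Y : Set G := X ∪ Quotient.out '' S
  have hYfin : Y.Finite := hXfin.union (hS.image _)
  have : Finite Y := hYfin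
  obtain ⟨n, ⟨e⟩⟩ := Finite.exists_equiv_fin Y
  let g : Fin n → G := fun i => (e.symm i : G)
  have hgY : Set.range g = Y := by
    rw [show g = Subtype.val ∘ e.symm from rfl, Set.range_comp, e.symm.surjective.range_eq,
      Set.image_univ, Subtype.range_coe]
  refine ⟨n, fun i => (g i : G ⧸ N), ?_, fun 𝒜 h𝒜 h1 => ?_⟩
  · rw [show (fun i => (g i : G ⧸ N)) = (fun x : G => (x : G ⧸ N)) ∘ g from rfl, Set.range_comp,
      hgY, Set.image_union, Set.image_image]
    simp only [QuotientGroup.out_eq', Set.image_id']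
    exact Set.union_eq_self_of_subset_left hXS
  have : Finite 𝒜 := h𝒜
  obtain ⟨k, ⟨c⟩⟩ := Finite.exists_equiv_fin (𝒜 → Prop)
  -- The cells are the atoms of the Boolean algebra generated by `𝒜`, pulled back to `G`.
  let col : G → Fin k := fun x => c fun A => (x : G ⧸ N) ∈ A.1
  let E : Fin k → Set G := fun j => {x | col x = j}
  have hgen : IsGenerating g := by
    rw [IsGenerating, hgY, eq_top_iff, ← hX]
    exact Subgroup.closure_mono Set.subset_union_left
  have hpart : IsPartition E := fun x => ⟨col x, rfl, fun j hj => hj.symm⟩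
  have hmem : (⟨n, k, TwoSidedConfigSet g E⟩ : Σ n m : ℕ, Set (TwoSidedConfig n m)) ∈
      TwoSidedConfigSets H := by
    have h0 := heq.subset
    exact h0 ⟨g, E, hgen, hpart, rfl⟩
  obtain ⟨h, D, hgenH, hpartD, hcon⟩ := hmem
  simp only at h D hgenH hpartD hcon
  choose χ hχ hχu using hpartD
  have hχ' : ∀ {y j}, y ∈ D j → j = χ y := fun {y j} hj => hχu y j hj
  let F : Set (G ⧸ N) → Set H := fun A => {y | ∃ hA : A ∈ 𝒜, c.symm (χ y) ⟨A, hA⟩}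
  have hF : ∀ y x, χ y = col x → ∀ A ∈ 𝒜, (y ∈ F A ↔ (x : G ⧸ N) ∈ A) := by
    intro y x hyx A hA
    simp only [F, col, Set.mem_ofPred_eq, hyx, Equiv.symm_apply_apply, hA, exists_true_left]
  refine ⟨h, F, hgenH, ?_, ?_⟩
  · have h0 : ((col 1, (fun i => col (g i * 1)), fun i => col (1 * g i)) :
        TwoSidedConfig n k) ∈ TwoSidedConfigSet h D :=
      hcon ▸ ⟨1, rfl, fun i => ⟨rfl, rfl⟩⟩
    obtain ⟨y, hy, -⟩ := h0
    exact ⟨y, (hF y 1 (hχ' hy).symm _ h1).2 rfl⟩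
  · intro y
    have h0 : ((χ y, (fun i => χ (h i * y)), fun i => χ (y * h i)) :
        TwoSidedConfig n k) ∈ TwoSidedConfigSet g E :=
      hcon ▸ ⟨y, hχ y, fun i => ⟨hχ _, hχ _⟩⟩
    obtain ⟨x, hx, hx'⟩ := h0
    exact ⟨x, fun A hA => ⟨hF y x hx.symm A hA, fun i =>
      ⟨hF _ (g i * x) (hx' i).1.symm A hA, hF _ (x * g i) (hx' i).2.symm A hA⟩⟩⟩

section Mimics

variable {Q : Type u} {H : Type v} [Group Q] [Group H] {n : ℕ} {g : Fin n → Q}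
    {h : Fin n → H} {𝒜 : Set (Set Q)} {F : Set Q → Set H}

theorem Mimics.mul_mem_iff (m : Mimics g h 𝒜 F) {i : Fin n} {a b : Q} (hab : g i * a = b)
    (ha : {a} ∈ 𝒜) (hb : {b} ∈ 𝒜) (y : H) : h i * y ∈ F {b} ↔ y ∈ F {a} := by
  obtain ⟨x, hx⟩ := m.loc y
  rw [((hx _ hb).2 i).1, (hx _ ha).1, ← hab]
  simp

theorem Mimics.mem_mul_iff (m : Mimics g h 𝒜 F) {i : Fin n} {a b : Q} (hab : a * g i = b)
    (ha : {a} ∈ 𝒜) (hb : {b} ∈ 𝒜) (y : H) : y * h i ∈ F {b} ↔ y ∈ F {a} := by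
  obtain ⟨x, hx⟩ := m.loc y
  rw [((hx _ hb).2 i).2, (hx _ ha).1, ← hab]
  simp

/-- The left stabilizer of a subset of a group. -/
def leftStab (M : Set H) : Subgroup H where
  carrier := {k | ∀ y, k * y ∈ M ↔ y ∈ M}
  one_mem' := by simp
  mul_mem' := by
    intro a b ha hb y
    rw [mul_assoc, ha, hb]
  inv_mem' := by
    intro a ha y
    rw [← ha, mul_inv_cancel_left]

theorem mem_leftStab {M : Set H} {k : H} : k ∈ leftStab M ↔ ∀ y, k * y ∈ M ↔ y ∈ M := Iff.rfl

/-- The cell `F {1}` is invariant under conjugation: both `h i * F {1}` and `F {1} * h i`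
equal `F {g i}`. Hence its left stabilizer is normal. -/
theorem Mimics.normal (m : Mimics g h 𝒜 F) (h1 : {1} ∈ 𝒜) (hg : ∀ i, {g i} ∈ 𝒜) :
    (leftStab (F {1})).Normal := by
  have hc : ∀ k : H, ∀ y, k * y * k⁻¹ ∈ F {1} ↔ y ∈ F {1} := by
    intro k
    have hk : k ∈ Subgroup.closure (Set.range h) := m.gen ▸ Subgroup.mem_top k
    induction hk using Subgroup.closure_induction with
    | mem k hk =>
      obtain ⟨i, rfl⟩ := hk
      intro y
      rw [← m.mem_mul_iff (i := i) (one_mul _) h1 (hg i), inv_mul_cancel_right,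
        m.mul_mem_iff (mul_one _) h1 (hg i)]
    | one => simp
    | mul a b _ _ iha ihb =>
      intro y
      rw [← ihb y, ← iha (b * y * b⁻¹)]
      simp only [mul_inv_rev, mul_assoc]
    | inv a _ ih =>
      intro y
      rw [← ih]
      simp only [mul_assoc, inv_inv, mul_inv_cancel, mul_one, mul_inv_cancel_left]
  refine ⟨fun k hk z y => ?_⟩
  have h2 := hc z⁻¹ (z * k * z⁻¹ * y)
  have h3 := hc z⁻¹ y
  rw [← h2, ← h3, ← hk (z⁻¹ * y * z⁻¹⁻¹)]
  simp only [mul_assoc, inv_inv, inv_mul_cancel_left]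

theorem Mimics.mk_eq_of_eq (m : Mimics g h 𝒜 F) (h1 : {1} ∈ 𝒜) (hg : ∀ i, {g i} ∈ 𝒜)
    {i j : Fin n} (hij : g i = g j) :
    (h i : H ⧸ leftStab (F {1})) = (h j : H ⧸ leftStab (F {1})) := by
  rw [QuotientGroup.eq]
  intro y
  rw [← m.mul_mem_iff (i := i) (mul_one _) h1 (hg i), ← mul_assoc, mul_inv_cancel_left, hij,
    m.mul_mem_iff (mul_one _) h1 (hg j)]

theorem Mimics.mk_eq_of_mul_eq (m : Mimics g h 𝒜 F) (h1 : {1} ∈ 𝒜) (hg : ∀ i, {g i} ∈ 𝒜)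
    {i j l : Fin n} (hl : g l = g i * g j) :
    (h l : H ⧸ leftStab (F {1})) = ((h i * h j : H) : H ⧸ leftStab (F {1})) := by
  rw [QuotientGroup.eq]
  intro y
  rw [← m.mul_mem_iff (i := l) (mul_one _) h1 (hg l), ← mul_assoc, mul_inv_cancel_left, mul_assoc,
    m.mul_mem_iff hl.symm (hg j) (hg l), m.mul_mem_iff (mul_one _) h1 (hg j)]

/-- A finite amount of data certifies injectivity on `L`: for suitable finite `S` and `𝒜`,
whenever `H` mimics `Q` and a homomorphism `θ` from `Q` to a quotient of `H` by a subgroup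
preserving `F {1}` sends `g i` to `h i`, then `θ` has trivial kernel on `L`. -/
def Separated (H : Type v) [Group H] (L : Subgroup Q) : Prop :=
  ∃ (S : Set Q) (𝒜 : Set (Set Q)), S.Finite ∧ 𝒜.Finite ∧
    ∀ (n : ℕ) (g : Fin n → Q) (h : Fin n → H) (ℬ : Set (Set Q)) (F : Set Q → Set H),
      Mimics g h ℬ F → {1} ∈ ℬ → S ⊆ Set.range g → 𝒜 ⊆ ℬ →
      ∀ (K : Subgroup H) [K.Normal] (θ : Q →* H ⧸ K), K ≤ leftStab (F {1}) →
        (∀ i, θ (g i) = h i) → ∀ x ∈ L, θ x = 1 → x = 1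

/-- Elements of a subgroup `L` generated by some of the `g i` can be lifted along `θ` to
elements of `H` preserving the subset `F L`. -/
theorem Mimics.exists_lift (m : Mimics g h 𝒜 F) {L : Subgroup Q} (hL : (L : Set Q) ∈ 𝒜)
    {S : Set Q} (hSL : Subgroup.closure S = L) (hSg : S ⊆ Set.range g) {K : Subgroup H}
    [K.Normal] (θ : Q →* H ⧸ K) (hθ : ∀ i, θ (g i) = h i) :
    ∀ x ∈ L, ∃ k ∈ leftStab (F L), θ x = (k : H ⧸ K) := by
  have hSL' : ∀ x ∈ S, x ∈ L := fun x hx => hSL ▸ Subgroup.subset_closure hx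
  intro x hx
  rw [← hSL] at hx
  induction hx using Subgroup.closure_induction with
  | mem x hx =>
    obtain ⟨i, rfl⟩ := hSg hx
    refine ⟨h i, fun y => ?_, hθ i⟩
    obtain ⟨x, hx'⟩ := m.loc y
    rw [((hx' _ hL).2 i).1, (hx' _ hL).1]
    exact Subgroup.mul_mem_cancel_left _ (hSL' _ hx)
  | one => exact ⟨1, one_mem _, by simp⟩
  | mul a b _ _ iha ihb =>
    obtain ⟨k, hk, hk'⟩ := iha
    obtain ⟨l, hl, hl'⟩ := ihb
    exact ⟨k * l, mul_mem hk hl, by rw [map_mul, hk', hl', QuotientGroup.mk_mul]⟩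
  | inv a _ ih =>
    obtain ⟨k, hk, hk'⟩ := ih
    exact ⟨k⁻¹, inv_mem hk, by rw [map_inv, hk', QuotientGroup.mk_inv]⟩

theorem Mimics.mem_of_one_mem (m : Mimics g h 𝒜 F) (h1 : {1} ∈ 𝒜) {A : Set Q} (hA : A ∈ 𝒜)
    {y : H} (hy : y ∈ F {1}) : y ∈ F A ↔ 1 ∈ A := by
  obtain ⟨x, hx⟩ := m.loc y
  obtain rfl : x = 1 := by simpa using (hx _ h1).1.1 hy
  exact (hx _ hA).1

/-- Induction along the series. If `x = τ l` lies in the kernel, with `l ∈ L` and `τ` representing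
a class of a finite factor, then a lift of `x` preserves `F {1}` but moves it into a copy of `τ L`,
so `1 ∈ τ L`. For an infinite cyclic factor, a lift of `t ^ a * l` with `0 < a` moves `F {1}` into
the image of the union of the `t ^ n L`, `0 < n`, which does not contain `1`. Either way `x ∈ L`. -/
theorem Series.separated {L : Subgroup Q} (hL : Series L) : Separated H L := by
  induction hL with
  | bot =>
    exact ⟨∅, ∅, Set.finite_empty, Set.finite_empty,
      fun _ _ _ _ _ _ _ _ _ _ _ _ _ _ x hx _ => Subgroup.mem_bot.1 hx⟩
  | @fin L L' hL hle hn T hT hTL hcov ih =>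
    obtain ⟨S₀, hS₀, hSL⟩ := hL.fg
    obtain ⟨S, 𝒜, hS, h𝒜, H0⟩ := ih
    refine ⟨S ∪ S₀ ∪ T, insert (L : Set Q) 𝒜, (hS.union hS₀).union hT, h𝒜.insert _, ?_⟩
    intro n g h ℬ F m h1 hSg h𝒜ℬ K _ θ hK hθ x hx hx1
    have hLℬ : (L : Set Q) ∈ ℬ := h𝒜ℬ (Set.mem_insert _ _)
    refine H0 n g h ℬ F m h1 (fun s hs => hSg (.inl (.inl hs)))
      (fun A hA => h𝒜ℬ (Set.mem_insert_of_mem _ hA)) K θ hK hθ x ?_ hx1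
    obtain ⟨τ, hτ, hl⟩ := hcov x hx
    obtain ⟨i, rfl⟩ := hSg (.inr hτ)
    obtain ⟨k, hk, hkl⟩ := m.exists_lift hLℬ hSL (fun s hs => hSg (.inl (.inr hs))) θ hθ _ hl
    have hik : h i * k ∈ K := by
      rw [← QuotientGroup.eq_one_iff, QuotientGroup.mk_mul, ← hkl, ← hθ, ← map_mul,
        mul_inv_cancel_left, hx1]
    obtain ⟨y, hy⟩ := m.nonempty
    have hky : k * y ∈ F L := (hk y).2 ((m.mem_of_one_mem h1 hLℬ hy).2 L.one_mem)
    have hiky := (hK hik y).2 hy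
    obtain ⟨z, hz⟩ := m.loc (k * y)
    rw [mul_assoc, ((hz _ h1).2 i).1, Set.mem_singleton_iff] at hiky
    have hzL : z ∈ L := (hz _ hLℬ).1.1 hky
    have hgi : g i ∈ L := by
      rw [eq_inv_of_mul_eq_one_left hiky]; exact inv_mem hzL
    have := mul_mem hgi hl
    rwa [mul_inv_cancel_left] at this
  | @inf L L' hL hle hn t htL ht hcov ih =>
    obtain ⟨S₀, hS₀, hSL⟩ := hL.fg
    obtain ⟨S, 𝒜, hS, h𝒜, H0⟩ := ih
    -- Left multiplication by `t` maps both `L` and the positive half `A` of `L'` into `A`.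
    let A : Set Q := {x | ∃ n : ℕ, 0 < n ∧ (t ^ n)⁻¹ * x ∈ L}
    refine ⟨S ∪ S₀ ∪ {t}, insert (L : Set Q) (insert A 𝒜),
      (hS.union hS₀).union (Set.finite_singleton t), (h𝒜.insert _).insert _, ?_⟩
    intro n g h ℬ F m h1 hSg h𝒜ℬ K _ θ hK hθ x hx hx1
    have hLℬ : (L : Set Q) ∈ ℬ := h𝒜ℬ (Set.mem_insert _ _)
    have hAℬ : A ∈ ℬ := h𝒜ℬ (Set.mem_insert_of_mem _ (Set.mem_insert _ _))
    refine H0 n g h ℬ F m h1 (fun s hs => hSg (.inl (.inl hs)))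
      (fun A hA => h𝒜ℬ (Set.mem_insert_of_mem _ (Set.mem_insert_of_mem _ hA))) K θ hK hθ x ?_ hx1
    obtain ⟨i, hi⟩ := hSg (.inr rfl)
    have key : ∀ x ∈ L', θ x = 1 → ∀ a : ℕ, 0 < a → (t ^ a)⁻¹ * x ∉ L := by
      intro x hx hx1 a ha hl
      obtain ⟨k, hk, hkl⟩ := m.exists_lift hLℬ hSL (fun s hs => hSg (.inl (.inr hs))) θ hθ _ hl
      have hik : h i ^ a * k ∈ K := by
        rw [← QuotientGroup.eq_one_iff, QuotientGroup.mk_mul, QuotientGroup.mk_pow, ← hkl, ← hθ,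
          hi, ← map_pow, ← map_mul, mul_inv_cancel_left, hx1]
      obtain ⟨y, hy⟩ := m.nonempty
      have hky : k * y ∈ F L := (hk y).2 ((m.mem_of_one_mem h1 hLℬ hy).2 L.one_mem)
      have hpow : ∀ b : ℕ, h i ^ (b + 1) * (k * y) ∈ F A := by
        intro b
        induction b with
        | zero =>
          obtain ⟨z, hz⟩ := m.loc (k * y)
          rw [zero_add, pow_one, ((hz _ hAℬ).2 i).1, hi]
          exact ⟨1, one_pos, by simpa using (hz _ hLℬ).1.1 hky⟩
        | succ b ihb =>
          obtain ⟨z, hz⟩ := m.loc (h i ^ (b + 1) * (k * y))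
          rw [pow_succ' _ (b + 1), mul_assoc, ((hz _ hAℬ).2 i).1, hi]
          obtain ⟨c, hc, hcz⟩ := (hz _ hAℬ).1.1 ihb
          refine ⟨c + 1, Nat.succ_pos c, ?_⟩
          rwa [pow_succ', mul_inv_rev, mul_assoc, inv_mul_cancel_left]
      have hM := (hK hik y).2 hy
      obtain ⟨b, rfl⟩ := Nat.exists_eq_succ_of_ne_zero ha.ne'
      obtain ⟨c, hc, hcL⟩ := (m.mem_of_one_mem h1 hAℬ hM).1 (by rw [mul_assoc]; exact hpow b)
      exact ht c hc (by simpa using hcL)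
    obtain ⟨a, ha⟩ := hcov x hx
    rcases lt_trichotomy a 0 with h0 | rfl | h0
    · -- A negative exponent for `x` is a positive one for `x⁻¹`.
      exfalso
      refine key x⁻¹ (inv_mem hx) (by rw [map_inv, hx1, inv_one]) (-a).toNat (by omega) ?_
      have h2 := hn ((t ^ a)⁻¹) (inv_mem (zpow_mem htL a)) _ (inv_mem ha)
      rw [← zpow_natCast, Int.toNat_of_nonneg (by omega), zpow_neg]
      convert h2 using 1
      group
    · simpa using ha
    · exfalso
      refine key x hx hx1 a.toNat (by omega) ?_
      rwa [← zpow_natCast, Int.toNat_of_nonneg h0.le]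

end Mimics

/-! ### The isomorphism of quotients -/

/-- If G ≈ₜ H and N ⊴ G with G/N polycyclic or FC, then G/N ≅ H/𝔑 for some
normal subgroup 𝔑 of H. -/
theorem quotient_isomorphism_of_configEqT_of_polycyclic_or_FC_quotient
    {G : Type*} {H : Type*} [Group G] [Group H]
    (hGfg : Group.FG G) (hHfg : Group.FG H)
    (N : Subgroup G) [N.Normal]
    (hquot : IsPolycyclic (G ⧸ N) ∨ IsFCGroup (G ⧸ N))
    (heq : ConfigEqT G H) :
    ∃ 𝔑 : Subgroup H, ∃ hn : 𝔑.Normal,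
      letI := hn
      Nonempty ((G ⧸ N) ≃* (H ⧸ 𝔑)) := by
  classical
  have hseries : Series (⊤ : Subgroup (G ⧸ N)) := by
    rcases hquot with hq | hq
    · exact hq.series
    · exact hq.series (QuotientGroup.fg N)
  obtain ⟨S, 𝒜, hS, h𝒜, hsep⟩ := hseries.separated (H := H)
  obtain ⟨X₀, hX₀, hmim⟩ := exists_mimics hGfg N heq
  obtain ⟨B, hB, hSB, -, hBf⟩ := hseries.finPres (S ∪ X₀) (hS.union hX₀) fun _ _ => trivial
  obtain ⟨n, g, hg, hmim⟩ := hmim (B ∪ B * B) (hB.union (hB.mul hB))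
    ((Set.subset_union_right.trans hSB).trans Set.subset_union_left)
  let ℬ : Set (Set (G ⧸ N)) := insert {1} (𝒜 ∪ Set.range fun i => {g i})
  have h1 : {1} ∈ ℬ := Set.mem_insert _ _
  have hgℬ : ∀ i, {g i} ∈ ℬ := fun i => .inr (.inr ⟨i, rfl⟩)
  obtain ⟨h, F, m⟩ := hmim ℬ ((h𝒜.union (Set.finite_range _)).insert _) h1
  have hK : (leftStab (F {1})).Normal := m.normal h1 hgℬ
  -- `h` descends to a map `f` on the finite set `range g`, multiplicative on `B`.
  let f : G ⧸ N → H ⧸ leftStab (F {1}) := fun x =>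
    if hx : ∃ i, g i = x then (h hx.choose : H ⧸ leftStab (F {1})) else 1
  have hfg : ∀ i, f (g i) = h i := by
    intro i
    have hx : ∃ j, g j = g i := ⟨i, rfl⟩
    simp only [f, hx, dite_true]
    exact m.mk_eq_of_eq h1 hgℬ hx.choose_spec
  have hBg : ∀ x ∈ B, ∃ i, g i = x := fun x hx =>
    (hg.symm ▸ Or.inl hx : x ∈ Set.range g)
  have hfB : MulOn B f := by
    intro x hx y hy
    obtain ⟨l, hl⟩ : x * y ∈ Set.range g := hg.symm ▸ Or.inr (Set.mul_mem_mul hx hy)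
    obtain ⟨i, rfl⟩ := hBg x hx
    obtain ⟨j, rfl⟩ := hBg y hy
    rw [← hl, hfg l, hfg i, hfg j, m.mk_eq_of_mul_eq h1 hgℬ hl, QuotientGroup.mk_mul]
  obtain ⟨θ₀, hθ₀, hθB⟩ := hBf _ f hfB
  let θ : G ⧸ N →* H ⧸ leftStab (F {1}) := MonoidHom.mk' θ₀ fun x y => hθ₀ x trivial y trivial
  have hθf : ∀ x ∈ B, θ x = f x := hθB
  have hθ : ∀ i, θ (g i) = h i := by
    intro i
    rw [← hfg]
    have hi : g i ∈ B ∪ B * B := hg ▸ Set.mem_range_self i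
    rcases hi with hi | ⟨x, hx, y, hy, hxy⟩
    · exact hθf _ hi
    · simp only at hxy
      rw [← hxy, map_mul, hθf x hx, hθf y hy, hfB x hx y hy]
  refine ⟨leftStab (F {1}), hK, ⟨MulEquiv.ofBijective θ ⟨?_, ?_⟩⟩⟩
  · rw [injective_iff_map_eq_one]
    intro x hx
    refine hsep n g h ℬ F m h1 ?_ (fun A hA => .inr (.inl hA)) _ θ le_rfl hθ x trivial hx
    exact fun s hs => hBg s (hSB (.inl hs))
  · intro z
    obtain ⟨k, rfl⟩ := QuotientGroup.mk_surjective z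
    have hk : k ∈ Subgroup.closure (Set.range h) := m.gen ▸ Subgroup.mem_top k
    induction hk using Subgroup.closure_induction with
    | mem k hk =>
      obtain ⟨i, rfl⟩ := hk
      exact ⟨g i, hθ i⟩
    | one => exact ⟨1, map_one θ⟩
    | mul a b _ _ iha ihb =>
      obtain ⟨x, hx⟩ := iha
      obtain ⟨y, hy⟩ := ihb
      exact ⟨x * y, by rw [map_mul, hx, hy, QuotientGroup.mk_mul]⟩
    | inv a _ ih =>
      obtain ⟨x, hx⟩ := ih
      exact ⟨x⁻¹, by rw [map_inv, hx, QuotientGroup.mk_inv]⟩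
end

section
/- Let G and H be groups with generating sets 𝔤 = (g₁,…,gₙ) of G and 𝔥 = (h₁,…,hₙ) of H and partitions ℰ = (E₁,…,Eₘ) of G and ℱ = (F₁,…,Fₘ) of H such that Con_t(𝔤, ℰ) = Con_t(𝔥, ℱ). Let I₁, I₂ ⊆ {1,…,m} and set A_j = ⋃_{k∈I_j} E_k and B_j = ⋃_{k∈I_j} F_k for j = 1, 2. Then for every r ∈ {1,…,n}: (1) if g_r·A₁ ⊆ A₂ then h_r·B₁ ⊆ B₂; (2) if A₁·g_r ⊆ A₂ then B₁·h_r ⊆ B₂; (3) if g_r·A₁ = A₂ then h_r·B₁ = B₂; (4) if A₁·g_r = A₂ then B₁·h_r = B₂. -/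
/-!
Equal two-sided configuration sets mean that every `y : H` has a partner `x : G` with the same
configuration; as the cells are disjoint, `y`, `h r * y` and `y * h r` then lie in exactly the same
unions of cells as `x`, `g r * x` and `x * g r` (`exists_partner`). Since translations are
bijective, each of the four relations between `A₁` and `A₂` is a condition on every point
separately: `g r * A₁ ⊆ A₂` says that `x ∈ A₁` implies `g r * x ∈ A₂`, and `g r * A₁ = A₂` says that
`x ∈ A₁` if and only if `g r * x ∈ A₂`. Such a condition passes from each `x` to its partners.
-/

open scoped Pointwise

universe u v

/-- In a partition, the cell containing a point decides its membership in a union of cells. -/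
lemma IsPartition.mem_iUnion_iff {G : Type*} {m : ℕ} {E : Fin m → Set G} (hE : IsPartition E)
    {x : G} {k : Fin m} (hx : x ∈ E k) (I : Set (Fin m)) : x ∈ ⋃ j ∈ I, E j ↔ k ∈ I := by
  simp only [Set.mem_iUnion, exists_prop]
  constructor
  · rintro ⟨j, hj, hxj⟩
    exact (hE x).unique hxj hx ▸ hj
  · exact fun hk => ⟨k, hk, hx⟩

/-- Every point of `H` has a partner in `G` with the same configuration, hence with the same
membership in unions of cells, also after translation by corresponding generators. -/
lemma exists_partner {G H : Type*} [Group G] [Group H] {n m : ℕ}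
    {g : Fin n → G} {h : Fin n → H} {E : Fin m → Set G} {F : Fin m → Set H}
    (hE : IsPartition E) (hF : IsPartition F)
    (heq : TwoSidedConfigSet g E = TwoSidedConfigSet h F) (r : Fin n) (y : H) :
    ∃ x : G, ∀ I : Set (Fin m),
      (x ∈ ⋃ k ∈ I, E k ↔ y ∈ ⋃ k ∈ I, F k) ∧
      (g r * x ∈ ⋃ k ∈ I, E k ↔ h r * y ∈ ⋃ k ∈ I, F k) ∧
      (x * g r ∈ ⋃ k ∈ I, E k ↔ y * h r ∈ ⋃ k ∈ I, F k) := by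
  choose cell hcell using fun y => (hF y).exists
  have hc : (cell y, (fun i => cell (h i * y)), (fun i => cell (y * h i))) ∈
      TwoSidedConfigSet h F := ⟨y, hcell _, fun i => ⟨hcell _, hcell _⟩⟩
  rw [← heq] at hc
  obtain ⟨x, hx, hxg⟩ := hc
  refine ⟨x, fun I => ⟨?_, ?_, ?_⟩⟩
  · rw [hE.mem_iUnion_iff hx, hF.mem_iUnion_iff (hcell y)]
  · rw [hE.mem_iUnion_iff (hxg r).1, hF.mem_iUnion_iff (hcell _)]
  · rw [hE.mem_iUnion_iff (hxg r).2, hF.mem_iUnion_iff (hcell _)]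

lemma image_eq_iff_of_bijective {α : Type*} {f : α → α} (hf : f.Bijective) {A B : Set α} :
    f '' A = B ↔ ∀ x, x ∈ A ↔ f x ∈ B := by
  constructor
  · rintro rfl x
    exact hf.1.mem_set_image.symm
  · intro hAB
    have : A = f ⁻¹' B := Set.ext hAB
    rw [this, Set.image_preimage_eq _ hf.2]

/-- transfer of translation inclusions/equalities between unions of
corresponding cells, for configuration pairs with equal two-sided configuration sets. -/
theorem transfer_of_translations_of_twoSidedConfigSet_eq
    {G : Type*} {H : Type*} [Group G] [Group H] {n m : ℕ}
    (g : Fin n → G) (h : Fin n → H) (E : Fin m → Set G) (F : Fin m → Set H)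
    (hg : IsGenerating g) (hh : IsGenerating h) (hE : IsPartition E) (hF : IsPartition F)
    (heq : TwoSidedConfigSet g E = TwoSidedConfigSet h F)
    (I₁ I₂ : Set (Fin m)) (r : Fin n) :
    (((fun x => g r * x) '' (⋃ k ∈ I₁, E k) ⊆ ⋃ k ∈ I₂, E k) →
      (fun x => h r * x) '' (⋃ k ∈ I₁, F k) ⊆ ⋃ k ∈ I₂, F k) ∧
    (((fun x => x * g r) '' (⋃ k ∈ I₁, E k) ⊆ ⋃ k ∈ I₂, E k) →
      (fun x => x * h r) '' (⋃ k ∈ I₁, F k) ⊆ ⋃ k ∈ I₂, F k) ∧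
    (((fun x => g r * x) '' (⋃ k ∈ I₁, E k) = ⋃ k ∈ I₂, E k) →
      (fun x => h r * x) '' (⋃ k ∈ I₁, F k) = ⋃ k ∈ I₂, F k) ∧
    (((fun x => x * g r) '' (⋃ k ∈ I₁, E k) = ⋃ k ∈ I₂, E k) →
      (fun x => x * h r) '' (⋃ k ∈ I₁, F k) = ⋃ k ∈ I₂, F k) := by
  have key := exists_partner hE hF heq r
  refine ⟨fun hA => ?_, fun hA => ?_, fun hA => ?_, fun hA => ?_⟩
  · rw [Set.image_subset_iff] at hA ⊢
    intro y hy
    obtain ⟨x, hx⟩ := key y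
    exact (hx I₂).2.1.1 (hA ((hx I₁).1.2 hy))
  · rw [Set.image_subset_iff] at hA ⊢
    intro y hy
    obtain ⟨x, hx⟩ := key y
    exact (hx I₂).2.2.1 (hA ((hx I₁).1.2 hy))
  · rw [image_eq_iff_of_bijective (Group.mulLeft_bijective _)] at hA ⊢
    intro y
    obtain ⟨x, hx⟩ := key y
    exact (hx I₁).1.symm.trans ((hA x).trans (hx I₂).2.1)
  · rw [image_eq_iff_of_bijective (Group.mulRight_bijective _)] at hA ⊢
    intro y
    obtain ⟨x, hx⟩ := key y
    exact (hx I₁).1.symm.trans ((hA x).trans (hx I₂).2.2)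
end

section
/- Let (𝔤, ℰ) and (𝔥, ℱ) be configuration pairs for groups G and H with ℰ = (E₁,…,E_r) and ℱ = (F₁,…,F_r), and let ℰ' = (E'₁,…,E'_s) and ℱ' = (F'₁,…,F'_s) be refinements of ℰ and ℱ respectively such that (ℰ', ℰ) and (ℱ', ℱ) are similar and Con_t(𝔤, ℰ') = Con_t(𝔥, ℱ'). Then Con_t(𝔤, ℰ) = Con_t(𝔥, ℱ). -/
/-!
Since `F` is a partition refined by `F'`, a cell `F' l` meeting `F k` lies inside `F k`. Similarity
of the pairs therefore says that `E' l` and `F' l` sit in cells of `E` and `F` with the same index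
(`mem_cell_of_similar`). Given a configuration of `(g, E)` realized by `x`, its refinement to `E'`
is also realized in `H`, by some `y`; replacing each fine cell by the coarse cell containing it, `y`
realizes the original configuration for `F` (`twoSidedConfigSet_subset`). The hypotheses are
symmetric in the two groups, so the reverse inclusion follows in the same way.
-/

open scoped Pointwise

universe u v

/-- Similarity lets coarse membership pass from `G` to `H` along a common fine index: only the part
of similarity saying that `F' l` meets `F k` whenever `E' l` meets `E k` is needed. -/
theorem mem_cell_of_similar {G H : Type*} {r s : ℕ}
    {E : Fin r → Set G} {F : Fin r → Set H} {E' : Fin s → Set G} {F' : Fin s → Set H}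
    (hF : IsPartition F) (hrefF : IsRefinement F' F) (hsim : SimilarPairs E E' F F')
    {k : Fin r} {l : Fin s} {x : G} {y : H} (hx : x ∈ E k) (hx' : x ∈ E' l) (hy : y ∈ F' l) :
    y ∈ F k := by
  have hl : (E k ∩ E' l).Nonempty := ⟨x, hx, hx'⟩
  obtain ⟨z, hz, hz'⟩ : (F k ∩ F' l).Nonempty := (Set.ext_iff.mp (hsim k) l).mp hl
  obtain ⟨k', hk'⟩ := hrefF l
  -- `z` lies both in `F k` and in the coarse cell containing `F' l`, so these coincide.
  have hkk : k = k' := (hF z).unique hz (hk' hz')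
  exact hkk ▸ hk' hy

theorem twoSidedConfigSet_subset {G H : Type*} [Group G] [Group H] {n r s : ℕ}
    {g : Fin n → G} {h : Fin n → H}
    {E : Fin r → Set G} {F : Fin r → Set H} {E' : Fin s → Set G} {F' : Fin s → Set H}
    (hF : IsPartition F) (hE' : IsPartition E') (hrefF : IsRefinement F' F)
    (hsim : SimilarPairs E E' F F')
    (hsub : TwoSidedConfigSet g E' ⊆ TwoSidedConfigSet h F') :
    TwoSidedConfigSet g E ⊆ TwoSidedConfigSet h F := by
  rintro ⟨c₀, a, b⟩ ⟨x, hx, hab⟩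
  -- `e u` is the index of the fine cell containing `u`.
  choose e he using fun u : G => (hE' u).exists
  obtain ⟨y, hy, hy'⟩ :=
    @hsub (e x, fun i => e (g i * x), fun i => e (x * g i)) ⟨x, he x, fun i => ⟨he _, he _⟩⟩
  exact ⟨y, mem_cell_of_similar hF hrefF hsim hx (he x) hy, fun i =>
    ⟨mem_cell_of_similar hF hrefF hsim (hab i).1 (he _) (hy' i).1,
      mem_cell_of_similar hF hrefF hsim (hab i).2 (he _) (hy' i).2⟩⟩

/-- if similar refinements have equal two-sided configuration sets, then so
do the original partitions. -/
theorem twoSidedConfigSet_eq_of_refinements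
    {G : Type*} {H : Type*} [Group G] [Group H] {n r s : ℕ}
    (g : Fin n → G) (h : Fin n → H)
    (E : Fin r → Set G) (F : Fin r → Set H)
    (E' : Fin s → Set G) (F' : Fin s → Set H)
    (hg : IsGenerating g) (hh : IsGenerating h)
    (hE : IsPartition E) (hF : IsPartition F)
    (hE' : IsPartition E') (hF' : IsPartition F')
    (hrefE : IsRefinement E' E) (hrefF : IsRefinement F' F)
    (hsim : SimilarPairs E E' F F')
    (heq : TwoSidedConfigSet g E' = TwoSidedConfigSet h F') :
    TwoSidedConfigSet g E = TwoSidedConfigSet h F := by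
  exact Set.Subset.antisymm
    (twoSidedConfigSet_subset hF hE' hrefF hsim heq.subset)
    (twoSidedConfigSet_subset hE hF' hrefE (fun k => (hsim k).symm) heq.symm.subset)
end

section
/- Let G be a finitely generated group with a normal subgroup N and quotient map q : G → G/N, and assume (𝔤, q⁻¹(ℰ)) is a golden configuration pair with respect to N. Then for every refinement ℰ' of ℰ (a finite partition of G/N refining ℰ), the configuration pair (𝔤, q⁻¹(ℰ')) is golden with respect to N. -/
/-!
Choose `π : Fin m' → Fin m` with `E' l ⊆ E (π l)`. Merging the cells of a partition along `π`
replaces its two-sided configuration set by the image under `π` applied entrywise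
(`twoSidedConfigSet_coarsen`), and merging `q⁻¹(ℰ')` along `π` gives `q⁻¹(ℰ)`. Hence if
`(h, F')` has the configuration set of `(g, q⁻¹(ℰ'))`, then `h` with the merged partition has that
of `(g, q⁻¹(ℰ))`, and goldenness of the latter applies with the same representative pairs.
The cell of `ℰ'` containing `1` is again `{1}`, and the cell of `F'` corresponding to it lies in the
cell of the merged partition corresponding to `{1}`, so disjointness of the translate is inherited.
-/

open scoped Pointwise

universe u v

/-- The family obtained from `F` by merging the cells with the same image under `π`. -/
def coarsen {X : Type*} {r s : ℕ} (π : Fin s → Fin r) (F : Fin s → Set X) : Fin r → Set X :=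
  fun k => {x | ∃ l, π l = k ∧ x ∈ F l}

theorem isPartition_coarsen {X : Type*} {r s : ℕ} (π : Fin s → Fin r) {F : Fin s → Set X}
    (hF : IsPartition F) : IsPartition (coarsen π F) := by
  intro x
  obtain ⟨l, hl, hu⟩ := hF x
  refine ⟨π l, ⟨l, rfl, hl⟩, ?_⟩
  rintro k ⟨l', rfl, hl'⟩
  rw [hu l' hl']

theorem twoSidedConfigSet_coarsen {G : Type*} [Group G] {n r s : ℕ} (π : Fin s → Fin r)
    (g : Fin n → G) (F : Fin s → Set G) :
    TwoSidedConfigSet g (coarsen π F) =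
      (fun c : TwoSidedConfig n s => (π c.1, π ∘ c.2.1, π ∘ c.2.2)) '' TwoSidedConfigSet g F := by
  ext ⟨c₀, cl, cr⟩
  constructor
  · rintro ⟨x, ⟨l, hl, hx⟩, h⟩
    choose a ha ha' using fun i => (h i).1
    choose b hb hb' using fun i => (h i).2
    exact ⟨(l, a, b), ⟨x, hx, fun i => ⟨ha' i, hb' i⟩⟩,
      Prod.ext hl (Prod.ext (funext ha) (funext hb))⟩
  · rintro ⟨c, ⟨x, hx, h⟩, hc⟩
    obtain ⟨rfl, rfl, rfl⟩ : π c.1 = c₀ ∧ π ∘ c.2.1 = cl ∧ π ∘ c.2.2 = cr := by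
      simpa [Prod.ext_iff] using hc
    exact ⟨x, ⟨_, rfl, hx⟩, fun i => ⟨⟨_, rfl, (h i).1⟩, ⟨_, rfl, (h i).2⟩⟩⟩

/-- any refinement of a golden configuration pair w.r.t. N is again a golden
configuration pair w.r.t. N. -/
theorem isGoldenConfigPair_of_refinement {G : Type u} [Group G]
    (N : Subgroup G) [N.Normal] {n m m' : ℕ}
    (g : Fin n → G) (E : Fin m → Set (G ⧸ N)) (E' : Fin m' → Set (G ⧸ N))
    (hgold : IsGoldenConfigPair.{u, v} N g E)
    (hE' : IsPartition E') (href : IsRefinement E' E) :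
    IsGoldenConfigPair.{u, v} N g E' := by
  obtain ⟨hg, hE, i₀, hi₀, p, J, ρ, hword, hdisj⟩ := hgold
  choose π hπ using href
  obtain ⟨j₀, hj₀, -⟩ := hE' 1
  have hπj : π j₀ = i₀ := (hE 1).unique (hπ _ hj₀) (by simp [hi₀])
  have hcoarse : coarsen π (fun l => QuotientGroup.mk' N ⁻¹' E' l)
      = fun k => QuotientGroup.mk' N ⁻¹' E k := by
    ext k x
    constructor
    · rintro ⟨l, rfl, hl⟩
      exact hπ l hl
    · intro hx
      obtain ⟨l, hl, -⟩ := hE' (QuotientGroup.mk' N x)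
      exact ⟨l, (hE _).unique (hπ l hl) hx, hl⟩
  refine ⟨hg, hE', j₀, ?_, p, J, ρ, hword, ?_⟩
  · refine Set.Subset.antisymm ?_ (Set.singleton_subset_iff.2 hj₀)
    rw [← hi₀, ← hπj]
    exact hπ j₀
  · intro H _ h F hh hF hcon x hx
    have hmerged : TwoSidedConfigSet g (fun k => QuotientGroup.mk' N ⁻¹' E k)
        = TwoSidedConfigSet h (coarsen π F) := by
      rw [← hcoarse, twoSidedConfigSet_coarsen, twoSidedConfigSet_coarsen, hcon]
    have hsub : F j₀ ⊆ coarsen π F i₀ := fun y hy => ⟨j₀, hπj, hy⟩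
    exact Set.subset_eq_empty (Set.inter_subset_inter (Set.smul_set_mono hsub) hsub)
      (hdisj H h _ hh (isPartition_coarsen π hF) hmerged x hx)
end

section
/- Let N be a normal subgroup of a finitely generated group G such that G/N is finitely presented, and suppose G has a golden configuration pair (𝔤, q⁻¹(ℰ)) with respect to N. Then there exists a refinement ℰ' of ℰ such that whenever Con_t(𝔤, q⁻¹(ℰ')) = Con_t(𝔥, ℱ) for a configuration pair (𝔥, ℱ) of a group H and M ∈ ℱ is the set corresponding to N, then M is a normal subset of H and W(J, ρ; 𝔥)·M ∩ M = ∅ for every representative pair (J, ρ) with W(J, ρ; 𝔤) ∉ N. -/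
/-!
The refinement `E'` is obtained from `E` by splitting off the points of a finite set `B ⊆ G ⧸ N`
as singleton cells. Write `F b` for the cell of `F` corresponding to `b ∈ B`. If the cells of `b`
and of `gᵢ b` are singletons, then equality of configuration sets forces `hᵢ F b = F (gᵢ b)`, and
likewise `F b hᵢ = F (b gᵢ)`. With `1` and all `gᵢ` in `B` this gives
`hᵢ M = F gᵢ = M hᵢ`, so `M` is a normal subset and its left stabilizer `K` is a normal subgroup
of `H`.

As `G ⧸ N` is finitely presented, the kernel of `FreeGroup (Fin n) → G ⧸ N` is the normal closure
of a finite set of relators (finite presentability does not depend on the chosen finite generating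
tuple). If `B` contains the images of all suffixes of these relators, then reading a relator letter
by letter shows that it maps `M` to `M` when evaluated in `H`. Hence every word that is trivial in
`G ⧸ N` evaluates in `H` to an element of `K`. A word representing `x ∉ N` therefore translates `M`
to the same set as the distinguished golden word of `x`, and the latter translate is disjoint
from `M` because goldenness applies to the coarsening of `F` corresponding to `E`.
-/

open scoped Pointwise

universe u v

/-! ### Words and finite presentations -/

section Words

variable {A B : Type*} [Group A] [Group B] {n p : ℕ}

theorem map_word (f : A →* B) (g : Fin n → A) (J : Fin p → Fin n) (ρ : Fin p → Bool) :
    f (word g J ρ) = word (fun i => f (g i)) J ρ := by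
  unfold word
  rw [map_list_prod, List.map_map]
  congr 2
  funext i
  by_cases h : ρ i <;> simp [h]

theorem lift_word (g : Fin n → A) (J : Fin p → Fin n) (ρ : Fin p → Bool) :
    FreeGroup.lift g (word FreeGroup.of J ρ) = word g J ρ := by
  rw [map_word]; simp

end Words

/-- Finite presentability does not depend on the finite generating tuple: the kernel of any
surjection from a free group of finite rank is normally generated by a finite set. -/
theorem exists_finite_normalClosure_eq_ker {Q : Type*} [Group Q]
    (hfp : IsFinitelyPresentedGroup Q) {n : ℕ} (φ : FreeGroup (Fin n) →* Q)
    (hφ : Function.Surjective φ) :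
    ∃ R : Set (FreeGroup (Fin n)), R.Finite ∧ Subgroup.normalClosure R = φ.ker := by
  obtain ⟨k, rels, hfin, ⟨e⟩⟩ := hfp
  let ψ : FreeGroup (Fin k) →* Q := e.toMonoidHom.comp (PresentedGroup.mk rels)
  have hψ : Function.Surjective ψ :=
    e.surjective.comp (PresentedGroup.mk_surjective rels)
  have hker : ∀ w, ψ w = 1 → w ∈ Subgroup.normalClosure rels := by
    intro w hw
    have : PresentedGroup.mk rels w = 1 := e.injective (by simpa [ψ] using hw)
    exact (QuotientGroup.eq_one_iff w).1 this
  have hrel : ∀ w ∈ rels, ψ w = 1 := by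
    intro w hw
    have : PresentedGroup.mk rels w = 1 := PresentedGroup.one_of_mem hw
    simp [ψ, this]
  choose a₀ ha₀ using fun i : Fin k => hφ (ψ (FreeGroup.of i))
  choose b₀ hb₀ using fun i : Fin n => hψ (φ (FreeGroup.of i))
  let a := FreeGroup.lift a₀
  let b := FreeGroup.lift b₀
  have ha : ∀ w, φ (a w) = ψ w := fun w =>
    DFunLike.congr_fun (FreeGroup.ext_hom (φ.comp a) ψ (by simp [a, ha₀])) w
  have hb : ∀ w, ψ (b w) = φ w := fun w =>
    DFunLike.congr_fun (FreeGroup.ext_hom (ψ.comp b) φ (by simp [b, hb₀])) w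
  -- The relators of the given presentation, rewritten in the new generators, together with the
  -- Tietze relators expressing each new generator through the old ones.
  let R := a '' rels ∪ Set.range fun i : Fin n => (FreeGroup.of i)⁻¹ * a (b (FreeGroup.of i))
  refine ⟨R, (hfin.image _).union (Set.finite_range _), le_antisymm ?_ ?_⟩
  · refine Subgroup.normalClosure_le_normal ?_
    rintro _ (⟨w, hw, rfl⟩ | ⟨i, rfl⟩)
    · simp [MonoidHom.mem_ker, ha, hrel w hw]
    · simp [MonoidHom.mem_ker, ha, hb]
  · intro w hw
    have hab : (QuotientGroup.mk' (Subgroup.normalClosure R)) =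
        (QuotientGroup.mk' (Subgroup.normalClosure R)).comp (a.comp b) := by
      refine FreeGroup.ext_hom _ _ fun i => ?_
      exact QuotientGroup.eq.2 (Subgroup.subset_normalClosure (Or.inr ⟨i, rfl⟩))
    have h1 : b w ∈ Subgroup.normalClosure rels := hker _ (by rw [hb]; exact hw)
    have h2 : Subgroup.normalClosure rels ≤ (Subgroup.normalClosure R).comap a := by
      refine Subgroup.normalClosure_le_normal fun r hr => ?_
      exact Subgroup.subset_normalClosure (Or.inl ⟨r, hr, rfl⟩)
    have h3 := DFunLike.congr_fun hab w
    rw [MonoidHom.comp_apply, MonoidHom.comp_apply] at h3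
    rw [← QuotientGroup.eq_one_iff]
    exact h3.trans ((QuotientGroup.eq_one_iff _).2 (h2 h1))

/-! ### Normal subsets and their stabilizers -/

section NormalSubset

variable {H : Type*} [Group H] {M : Set H}

/-- It suffices to check that a subset is normal on a generating tuple. -/
theorem isNormalSubset_of_generating {n : ℕ} {h : Fin n → H} (hh : IsGenerating h)
    (hM : ∀ i, h i • M = MulOpposite.op (h i) • M) : IsNormalSubset M := by
  intro y
  change y • M = MulOpposite.op y • M
  have hy : y ∈ Subgroup.closure (Set.range h) := by rw [hh]; trivial
  induction hy using Subgroup.closure_induction with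
  | mem x hx => obtain ⟨i, rfl⟩ := hx; exact hM i
  | one => simp
  | mul a b _ _ ha hb => rw [mul_smul, hb, smul_comm, ha, MulOpposite.op_mul, mul_smul]
  | inv a _ ha =>
    rw [inv_smul_eq_iff, smul_comm, ha, MulOpposite.op_inv, inv_smul_smul]

theorem IsNormalSubset.normal_stabilizer (hM : IsNormalSubset M) :
    (MulAction.stabilizer H M).Normal := by
  refine ⟨fun k hk y => ?_⟩
  have hy : y⁻¹ • M = MulOpposite.op y⁻¹ • M := hM y⁻¹
  rw [MulAction.mem_stabilizer_iff] at hk ⊢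
  rw [mul_smul, mul_smul, hy, smul_comm k, hk, ← hy, smul_inv_smul]

end NormalSubset

/-! ### Configurations, merging and refining partitions -/

/-- Merging the cells of a partition along an index map `π`. -/
def mergeCells {H : Type*} {m m' : ℕ} (π : Fin m' → Fin m) (F : Fin m' → Set H) (k : Fin m) : Set H :=
  {y | ∃ l, π l = k ∧ y ∈ F l}

theorem IsPartition.mergeCells {H : Type*} {m m' : ℕ} {π : Fin m' → Fin m} {F : Fin m' → Set H}
    (hF : IsPartition F) : IsPartition (mergeCells π F) := by
  intro y
  obtain ⟨l, hl, hu⟩ := hF y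
  refine ⟨π l, ⟨l, rfl, hl⟩, ?_⟩
  rintro _ ⟨l', rfl, hl'⟩
  rw [hu l' hl']

section Configurations

variable {G H : Type*} [Group G] [Group H] {n m : ℕ}

/-- Every point has a configuration, since a partition covers the group. -/
theorem exists_config {g : Fin n → G} {E : Fin m → Set G} (hE : IsPartition E) (x : G) :
    ∃ c ∈ TwoSidedConfigSet g E,
      x ∈ E c.1 ∧ ∀ i, g i * x ∈ E (c.2.1 i) ∧ x * g i ∈ E (c.2.2 i) := by
  choose k hk using fun y => (hE y).exists
  exact ⟨(k x, fun i => k (g i * x), fun i => k (x * g i)),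
    ⟨x, hk _, fun i => ⟨hk _, hk _⟩⟩, hk _, fun i => ⟨hk _, hk _⟩⟩

/-- Equality of configuration sets transports each point of one group to a point of the other
with the same configuration. -/
theorem exists_same_config {g : Fin n → G} {E : Fin m → Set G} {h : Fin n → H}
    {F : Fin m → Set H} (hE : IsPartition E) (hF : IsPartition F)
    (hc : TwoSidedConfigSet g E = TwoSidedConfigSet h F) (y : H) :
    ∃ x : G, (∀ k, x ∈ E k ↔ y ∈ F k) ∧
      (∀ i k, g i * x ∈ E k ↔ h i * y ∈ F k) ∧ ∀ i k, x * g i ∈ E k ↔ y * h i ∈ F k := by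
  obtain ⟨c, hcF, hy, hyi⟩ := exists_config (g := h) hF y
  rw [← hc] at hcF
  obtain ⟨x, hx, hxi⟩ := hcF
  have key : ∀ {a : G} {b : H} {l : Fin m}, a ∈ E l → b ∈ F l → ∀ k, a ∈ E k ↔ b ∈ F k := by
    intro a b l ha hb k
    constructor
    · intro h; rwa [(hE a).unique h ha]
    · intro h; rwa [(hF b).unique h hb]
  exact ⟨x, key hx hy, fun i => key (hxi i).1 (hyi i).1, fun i => key (hxi i).2 (hyi i).2⟩

/-- Left translation by a generator between corresponding cells: a relation
`gᵢ * x ∈ E b ↔ x ∈ E a` in `G` is visible in the configuration set. -/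
theorem smul_cell {g : Fin n → G} {E : Fin m → Set G} {h : Fin n → H}
    {F : Fin m → Set H} (hE : IsPartition E) (hF : IsPartition F)
    (hc : TwoSidedConfigSet g E = TwoSidedConfigSet h F) {i : Fin n} {a b : Fin m}
    (hab : ∀ x, g i * x ∈ E b ↔ x ∈ E a) : h i • F a = F b := by
  ext z
  rw [Set.mem_smul_set_iff_inv_smul_mem, smul_eq_mul]
  obtain ⟨x, h1, h2, -⟩ := exists_same_config hE hF hc ((h i)⁻¹ * z)
  rw [← h1, ← hab, h2, mul_inv_cancel_left]

/-- The right-handed version of `smul_cell`. -/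
theorem op_smul_cell {g : Fin n → G} {E : Fin m → Set G} {h : Fin n → H}
    {F : Fin m → Set H} (hE : IsPartition E) (hF : IsPartition F)
    (hc : TwoSidedConfigSet g E = TwoSidedConfigSet h F) {i : Fin n} {a b : Fin m}
    (hab : ∀ x, x * g i ∈ E b ↔ x ∈ E a) : MulOpposite.op (h i) • F a = F b := by
  ext z
  rw [Set.mem_smul_set_iff_inv_smul_mem, ← MulOpposite.op_inv, MulOpposite.smul_eq_mul_unop,
    MulOpposite.unop_op]
  obtain ⟨x, h1, -, h2⟩ := exists_same_config hE hF hc (z * (h i)⁻¹)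
  rw [← h1, ← hab, h2, inv_mul_cancel_right]

/-- The configuration set of a merged partition is the image of the original one. -/
theorem configSet_mergeCells {m' : ℕ} (π : Fin m' → Fin m) (h : Fin n → H)
    (F : Fin m' → Set H) :
    TwoSidedConfigSet h (mergeCells π F) =
      (fun c => (π c.1, π ∘ c.2.1, π ∘ c.2.2)) '' TwoSidedConfigSet h F := by
  ext c
  constructor
  · rintro ⟨y, ⟨l, hl, hy⟩, hyi⟩
    choose s hs using fun i => (hyi i).1
    choose t ht using fun i => (hyi i).2
    refine ⟨(l, s, t), ⟨y, hy, fun i => ⟨(hs i).2, (ht i).2⟩⟩, ?_⟩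
    exact Prod.ext hl (Prod.ext (funext fun i => (hs i).1) (funext fun i => (ht i).1))
  · rintro ⟨c', ⟨y, hy, hyi⟩, rfl⟩
    exact ⟨y, ⟨_, rfl, hy⟩, fun i => ⟨⟨_, rfl, (hyi i).1⟩, ⟨_, rfl, (hyi i).2⟩⟩⟩

end Configurations

/-- A partition can be refined so that each point of a finite set becomes a singleton cell. -/
theorem exists_refinement_singletons {Q : Type*} {m : ℕ} {E : Fin m → Set Q}
    (hE : IsPartition E) {B : Set Q} (hB : B.Finite) :
    ∃ (m' : ℕ) (E' : Fin m' → Set Q) (π : Fin m' → Fin m),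
      IsPartition E' ∧ (∀ l, E' l ⊆ E (π l)) ∧ ∀ b ∈ B, ∃ l, E' l = {b} := by
  classical
  choose κ hκ using fun x => (hE x).exists
  have := hB.fintype
  let e := Fintype.equivFin (B ⊕ Fin m)
  let s : Q → B ⊕ Fin m := fun x => if hx : x ∈ B then Sum.inl ⟨x, hx⟩ else Sum.inr (κ x)
  refine ⟨_, fun l => {x | e (s x) = l}, fun l => Sum.elim (fun b : B => κ b) id (e.symm l),
    fun x => ⟨e (s x), rfl, fun l hl => hl.symm⟩, ?_, ?_⟩
  · rintro l x rfl
    by_cases hx : x ∈ B <;> simp [s, hx, hκ]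
  · intro b hb
    refine ⟨e (Sum.inl ⟨b, hb⟩), ?_⟩
    ext x
    by_cases hx : x ∈ B
    · simp [s, hx]
    · have : x ≠ b := fun h => hx (h ▸ hb)
      simp [s, hx, this]

/-! ### The refinement attached to a finite presentation -/

/-- for a golden configuration pair w.r.t. N with G/N finitely presented,
there is a refinement such that the corresponding set M is a normal subset and is
disjoint from all its translates by words not presenting an element of N. -/
theorem exists_refinement_normal_subset_of_goldenConfigPair {G : Type u} [Group G]
    (hGfg : Group.FG G) (N : Subgroup G) [N.Normal] {n m : ℕ}
    (g : Fin n → G) (E : Fin m → Set (G ⧸ N))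
    (hfp : IsFinitelyPresentedGroup (G ⧸ N))
    (hgold : IsGoldenConfigPair.{u, v} N g E) :
    ∃ (m' : ℕ) (E' : Fin m' → Set (G ⧸ N)),
      IsPartition E' ∧ IsRefinement E' E ∧
      ∃ i₀ : Fin m', E' i₀ = ({1} : Set (G ⧸ N)) ∧
        ∀ (H : Type v) [Group H] (h : Fin n → H) (F : Fin m' → Set H),
          IsGenerating h → IsPartition F →
          TwoSidedConfigSet g (fun i => QuotientGroup.mk' N ⁻¹' E' i)
            = TwoSidedConfigSet h F →
          IsNormalSubset (F i₀) ∧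
          ∀ (p : ℕ) (J : Fin p → Fin n) (ρ : Fin p → Bool),
            word g J ρ ∉ N → word h J ρ • F i₀ ∩ F i₀ = ∅ := by
  classical
  obtain ⟨hg, hE, k₀, hk₀, P, J₀, ρ₀, hword, hdisj⟩ := hgold
  let q := QuotientGroup.mk' N
  have hq : Function.Surjective q := QuotientGroup.mk'_surjective N
  let φ : FreeGroup (Fin n) →* G ⧸ N := FreeGroup.lift fun i => q (g i)
  have hφq : φ = q.comp (FreeGroup.lift g) := FreeGroup.ext_hom _ _ fun i => by simp [φ]
  have hφ : Function.Surjective φ := by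
    rw [hφq]
    refine hq.comp ?_
    rw [← MonoidHom.range_eq_top, FreeGroup.range_lift_eq_closure]
    exact hg
  obtain ⟨R, hRfin, hR⟩ := exists_finite_normalClosure_eq_ker hfp φ hφ
  -- The points to be split off: the identity, the generators, and every vertex visited when a
  -- relator is read from right to left starting at the identity.
  let B : Set (G ⧸ N) := {1} ∪ Set.range (fun i => q (g i)) ∪
    ⋃ r ∈ R, (fun L => φ (FreeGroup.mk L)) '' {L | L <:+ r.toWord}
  have hB : B.Finite := by
    refine ((Set.finite_singleton _).union (Set.finite_range _)).union
      (hRfin.biUnion fun r _ => Set.Finite.image _ ?_)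
    refine (List.finite_toSet r.toWord.tails).subset fun L hL => ?_
    exact (List.mem_tails _ _).2 hL
  obtain ⟨m', E', π, hE', hπ, hsing⟩ := exists_refinement_singletons hE hB
  have : Nonempty (Fin m') := ⟨(hE' 1).exists.choose⟩
  choose! cell hcell using hsing
  have h1B : (1 : G ⧸ N) ∈ B := Or.inl (Or.inl rfl)
  have hgB : ∀ i, q (g i) ∈ B := fun i => Or.inl (Or.inr ⟨i, rfl⟩)
  have hsufB : ∀ r ∈ R, ∀ L, L <:+ r.toWord → φ (FreeGroup.mk L) ∈ B := fun r hr L hL =>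
    Or.inr (Set.mem_biUnion hr ⟨L, hL, rfl⟩)
  refine ⟨m', E', hE', fun l => ⟨π l, hπ l⟩, cell 1, hcell 1 h1B, ?_⟩
  intro H _ h F hh hF hc
  have hqE' : IsPartition fun i => q ⁻¹' E' i := fun x => hE' (q x)
  have hleft : ∀ i, ∀ b ∈ B, q (g i) * b ∈ B → h i • F (cell b) = F (cell (q (g i) * b)) := by
    intro i b hb hb'
    refine smul_cell hqE' hF hc fun x => ?_
    simp [hcell _ hb, hcell _ hb']
  have hright : ∀ i, MulOpposite.op (h i) • F (cell 1) = F (cell (q (g i))) := by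
    intro i
    refine op_smul_cell hqE' hF hc fun x => ?_
    simp [hcell _ h1B, hcell _ (hgB i)]
  have hnormal : IsNormalSubset (F (cell 1)) := by
    refine isNormalSubset_of_generating hh fun i => ?_
    rw [hright, hleft i 1 h1B (by simpa using hgB i), mul_one]
  refine ⟨hnormal, ?_⟩
  let η : FreeGroup (Fin n) →* H := FreeGroup.lift h
  have hwalk : ∀ L : List (Fin n × Bool), (∀ L', L' <:+ L → φ (FreeGroup.mk L') ∈ B) →
      η (FreeGroup.mk L) • F (cell 1) = F (cell (φ (FreeGroup.mk L))) := by
    intro L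
    induction L with
    | nil => intro _; rw [← FreeGroup.one_eq_mk, map_one, map_one, one_smul]
    | cons s L ih =>
      intro hL
      have hLB := hL L (List.suffix_cons s L)
      have hsB := hL _ List.suffix_rfl
      have ih' := ih fun L' hL' => hL L' (hL'.trans (List.suffix_cons s L))
      obtain ⟨i, _ | _⟩ := s
      · have hs : FreeGroup.mk ((i, false) :: L) = (FreeGroup.of i)⁻¹ * FreeGroup.mk L := rfl
        rw [hs] at hsB ⊢
        have hi : φ (FreeGroup.mk L) = q (g i) * φ ((FreeGroup.of i)⁻¹ * FreeGroup.mk L) := by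
          simp [φ]
        rw [map_mul, mul_smul, ih', map_inv, inv_smul_eq_iff, hi]
        have hηi : η (FreeGroup.of i) = h i := by simp [η]
        rw [hηi]
        exact (hleft i _ hsB (hi ▸ hLB)).symm
      · have hs : FreeGroup.mk ((i, true) :: L) = FreeGroup.of i * FreeGroup.mk L := rfl
        rw [hs] at hsB ⊢
        have hi : φ (FreeGroup.of i * FreeGroup.mk L) = q (g i) * φ (FreeGroup.mk L) := by
          simp [φ]
        have hηi : η (FreeGroup.of i) = h i := by simp [η]
        rw [map_mul, mul_smul, ih', hi, hηi]
        exact hleft i _ hLB (hi ▸ hsB)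
  have hnorm := hnormal.normal_stabilizer
  have hker : φ.ker ≤ (MulAction.stabilizer H (F (cell 1))).comap η := by
    rw [← hR]
    refine Subgroup.normalClosure_le_normal fun r hr => ?_
    have hφr : φ r = 1 := by
      have : r ∈ φ.ker := hR ▸ Subgroup.subset_normalClosure hr
      exact this
    have := hwalk r.toWord (hsufB r hr)
    rw [FreeGroup.mk_toWord, hφr] at this
    exact this
  -- Merging `F` along `π` recovers a partition with the configuration set of `E`, and merging
  -- adds nothing to `F (cell 1)` because `E k₀` is a singleton.
  have hmergeE : mergeCells π (fun i => q ⁻¹' E' i) = fun k => q ⁻¹' E k := by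
    ext k x
    constructor
    · rintro ⟨l, rfl, hx⟩; exact hπ l hx
    · intro hx
      obtain ⟨l, hl⟩ := (hE' (q x)).exists
      exact ⟨l, (hE (q x)).unique (hπ l hl) hx, hl⟩
  have hπ1 : π (cell 1) = k₀ := by
    refine (hE 1).unique (hπ (cell 1) ?_) ?_
    · rw [hcell 1 h1B]; rfl
    · rw [hk₀]; rfl
  have hmergeF : mergeCells π F k₀ = F (cell 1) := by
    ext y
    constructor
    · rintro ⟨l, hl, hy⟩
      obtain ⟨x, hx, -, -⟩ := exists_same_config hqE' hF hc y
      have hxl : q x ∈ E' l := (hx l).2 hy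
      have hx1 : q x = 1 := by
        have := hπ l hxl
        rw [hl, hk₀] at this
        exact this
      refine (hx (cell 1)).1 ?_
      change q x ∈ E' (cell 1)
      rw [hcell 1 h1B, hx1]; rfl
    · intro hy; exact ⟨_, hπ1, hy⟩
  intro p J ρ hw
  have hgolden := hdisj H h (mergeCells π F) hh hF.mergeCells
    (by
      change TwoSidedConfigSet g (fun k => q ⁻¹' E k) = _
      rw [← hmergeE, configSet_mergeCells, configSet_mergeCells]
      exact congrArg _ hc) _ hw
  rw [hmergeF] at hgolden
  have hφw : φ (word FreeGroup.of J ρ) =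
      φ (word FreeGroup.of (J₀ (word g J ρ)) (ρ₀ (word g J ρ))) := by
    have h2 := hword _ hw
    rw [lift_word (fun i => q (g i)), lift_word (fun i => q (g i)), ← h2, ← map_word]
  have hmem := hker (show (word FreeGroup.of (J₀ (word g J ρ)) (ρ₀ (word g J ρ)))⁻¹ *
    word FreeGroup.of J ρ ∈ φ.ker by rw [MonoidHom.mem_ker, map_mul, map_inv, hφw, inv_mul_cancel])
  rw [Subgroup.mem_comap, map_mul, map_inv, lift_word, lift_word, MulAction.mem_stabilizer_iff,
    mul_smul, inv_smul_eq_iff] at hmem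
  rw [hmem]
  exact hgolden
end

section
/- Let H be a group and M a nonempty normal subset of H such that for every h ∈ H, if h·M ∩ M ≠ ∅ then h·M = M. Then 𝔑 := {h ∈ H : h·M = M} is a normal subgroup of H, and M is a right coset of 𝔑, i.e., there exists x ∈ H with M = 𝔑·x. -/
/-!
The stabilizer `𝔑` of `M` under left translation is the required subgroup. Since translates of `M`
meeting `M` equal `M`, an element `n` lies in `𝔑` as soon as `n * m ∈ M` for a single `m ∈ M`.
As `M` is closed under conjugation, conjugating such a pair `m, n * m` shows that `𝔑` is normal.
For a fixed `x ∈ M`, an element `m` lies in `M` exactly when `m * x⁻¹ ∈ 𝔑`, so `M` is `𝔑 x`.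
-/

open scoped Pointwise

universe u v

/-- if M is a nonempty normal subset such that every translate meeting M
equals M, then 𝔑 = {h | hM = M} is a normal subgroup and M is a right coset of 𝔑. -/
theorem stabilizer_normal_and_coset_of_normal_subset {H : Type*} [Group H]
    (M : Set H) (hne : M.Nonempty) (hnorm : IsNormalSubset M)
    (hfix : ∀ h : H, ((fun x => h * x) '' M ∩ M).Nonempty → (fun x => h * x) '' M = M) :
    ∃ 𝔑 : Subgroup H, (𝔑 : Set H) = {h : H | (fun x => h * x) '' M = M} ∧
      𝔑.Normal ∧ ∃ x : H, M = (fun y => y * x) '' (𝔑 : Set H) := by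
  -- `hfix` reduces membership in the stabilizer to the existence of one `m ∈ M` with `n * m ∈ M`.
  have mem_of : ∀ {n m : H}, m ∈ M → n * m ∈ M → n ∈ MulAction.stabilizer H M :=
    fun {n m} hm hnm => hfix n ⟨n * m, ⟨m, hm, rfl⟩, hnm⟩
  have mul_mem : ∀ {n m : H}, n ∈ MulAction.stabilizer H M → m ∈ M → n * m ∈ M := by
    intro n m hn hm
    have h : (fun x => n * x) '' M = M := hn
    exact h ▸ ⟨m, hm, rfl⟩
  have conj_mem : ∀ (h : H) {m : H}, m ∈ M → h * m * h⁻¹ ∈ M := by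
    intro h m hm
    have hmem : h * m ∈ (fun x => x * h) '' M := hnorm h ▸ ⟨m, hm, rfl⟩
    obtain ⟨y, hy, hyx⟩ := hmem
    rwa [← show y * h = h * m from hyx, mul_inv_cancel_right]
  obtain ⟨x, hx⟩ := hne
  refine ⟨MulAction.stabilizer H M, rfl, ⟨fun n hn g => ?_⟩, x, ?_⟩
  · -- Conjugating `x, n * x ∈ M` by `g` gives `g * x * g⁻¹` and its translate by `g * n * g⁻¹`.
    refine mem_of (conj_mem g hx) ?_
    have h := conj_mem g (mul_mem hn hx)
    simpa [mul_assoc] using h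
  · ext m
    constructor
    · intro hm
      exact ⟨m * x⁻¹, mem_of hx (by simpa using hm), by simp⟩
    · rintro ⟨n, hn, rfl⟩
      exact mul_mem hn hx
end

section
/- Let (𝔤, ℰ) and (𝔥, ℱ) be configuration pairs for groups G and H with Con_t(𝔤, ℰ) = Con_t(𝔥, ℱ). Then Con(𝔤, ℰ) = Con(𝔥, ℱ) and Con(𝔤⁻¹, ℰ⁻¹) = Con(𝔥⁻¹, ℱ⁻¹). Consequently, if G ≈ₜ H then G ≈ H. -/
/-!
A two-sided configuration of `x` records the cells of `x`, of the `g i * x` and of the `x * g i`.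
Forgetting the last block projects `Con_t(g, E)` onto `Con(g, E)`, and forgetting the middle block
projects it onto `Con(g⁻¹, E⁻¹)`, because `(g i)⁻¹ * x ∈ (E j)⁻¹` says exactly that
`x⁻¹ * g i ∈ E j`. Both projections are onto: as `E` covers the group, the cells of the forgotten
block exist. Hence `Con_t(g, E)` alone determines both one-sided configuration sets. Applied to a
pair for `H` that realizes the two-sided configuration set of a given pair for `G`, and conversely,
this yields `Con(G) = Con(H)` from `Con_t(G) = Con_t(H)`.
-/

open scoped Pointwise

universe u v

theorem configSet_eq_image {G : Type*} [Group G] {n m : ℕ} (g : Fin n → G) {E : Fin m → Set G}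
    (hE : IsPartition E) :
    ConfigSet g E = (fun c => (c.1, c.2.1)) '' TwoSidedConfigSet g E := by
  ext ⟨c₀, c⟩
  constructor
  · rintro ⟨x, hx, hc⟩
    choose d hd using fun i => (hE (x * g i)).exists
    exact ⟨(c₀, c, d), ⟨x, hx, fun i => ⟨hc i, hd i⟩⟩, rfl⟩
  · rintro ⟨⟨_, _, d⟩, ⟨x, hx, hc⟩, ⟨⟩⟩
    exact ⟨x, hx, fun i => (hc i).1⟩

theorem configSet_inv_eq_image {G : Type*} [Group G] {n m : ℕ} (g : Fin n → G)
    {E : Fin m → Set G} (hE : IsPartition E) :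
    ConfigSet (fun i => (g i)⁻¹) (fun i => (E i)⁻¹)
      = (fun c => (c.1, c.2.2)) '' TwoSidedConfigSet g E := by
  ext ⟨c₀, c⟩
  constructor
  · rintro ⟨x, hx, hc⟩
    choose d hd using fun i => (hE (g i * x⁻¹)).exists
    exact ⟨(c₀, d, c), ⟨x⁻¹, hx, fun i => ⟨hd i, by simpa using hc i⟩⟩, rfl⟩
  · rintro ⟨⟨_, d, _⟩, ⟨x, hx, hc⟩, ⟨⟩⟩
    exact ⟨x⁻¹, by simpa using hx, fun i => by simpa using (hc i).2⟩

theorem configSets_subset {G H : Type*} [Group G] [Group H]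
    (hGH : TwoSidedConfigSets G ⊆ TwoSidedConfigSets H) : ConfigSets G ⊆ ConfigSets H := by
  rintro ⟨n, m, S⟩ ⟨g, E, hg, hE, hS⟩
  obtain ⟨h, F, hh, hF, hT⟩ :=
    @hGH ⟨n, m, TwoSidedConfigSet g E⟩ ⟨g, E, hg, hE, rfl⟩
  refine ⟨h, F, hh, hF, ?_⟩
  dsimp only at hS hT ⊢
  rw [hS, configSet_eq_image g hE, configSet_eq_image h hF, hT]

/-- equality of two-sided configuration sets implies equality of one-sided
configuration sets, for the pairs themselves and for their inverses; consequently
G ≈ₜ H implies G ≈ H. -/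
theorem configSet_eq_of_twoSidedConfigSet_eq (G : Type*) (H : Type*)
    [Group G] [Group H] :
    (∀ (n m : ℕ) (g : Fin n → G) (h : Fin n → H) (E : Fin m → Set G) (F : Fin m → Set H),
      IsGenerating g → IsGenerating h → IsPartition E → IsPartition F →
      TwoSidedConfigSet g E = TwoSidedConfigSet h F →
      ConfigSet g E = ConfigSet h F ∧
        ConfigSet (fun i => (g i)⁻¹) (fun i => (E i)⁻¹)
          = ConfigSet (fun i => (h i)⁻¹) (fun i => (F i)⁻¹)) ∧
    (ConfigEqT G H → ConfigEq G H) := by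
  refine ⟨fun n m g h E F _ _ hE hF hT => ⟨?_, ?_⟩, fun hGH => ?_⟩
  · rw [configSet_eq_image g hE, configSet_eq_image h hF, hT]
  · rw [configSet_inv_eq_image g hE, configSet_inv_eq_image h hF, hT]
  · exact (configSets_subset hGH.subset).antisymm (configSets_subset hGH.superset)
end
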